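/- arXiv:1102.3619 — 11 statements merged into one kernel-verified Lean document; each statement's English description precedes it below -/
import Mathlib

section
/- Let (V, E, ends) be a finite multigraph and let α : V → ℕ and β : E → ℕ. Then there exists an (α,β)-biorientation of the multigraph if and only if both of the following hold: (i) Σ_{v∈V} α(v) = Σ_{e∈E} β(e), and (ii) for every subset S ⊆ V, Σ_{e∈E_S} β(e) ≤ Σ_{v∈S} α(v), where E_S is the set of edges both of whose endpoints lie in S. -/
/-- **Existence criterion for (α,β)-biorientations of a finite multigraph.**
A finite multigraph is given by finite types `V` (vertices) and `E` (edges) and a map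
`ends : E → V × V` (the ordered pair of endpoints of each edge).  An `(α,β)`-biorientation
is a function `f : E → ℕ × ℕ` giving the weights of the two half-edges of each edge, such
that the two weights of each edge `e` add up to `β e`, and the total weight of the half-edges
incident to each vertex `v` is `α v`.  Such a biorientation exists iff
(i) `Σ_v α v = Σ_e β e` and (ii) for every subset `S` of vertices, the sum of `β` over the
edges with both endpoints in `S` is at most the sum of `α` over `S`. -/
theorem exists_biorientation_iff {V E : Type*} [Fintype V] [Fintype E] [DecidableEq V]
    (ends : E → V × V) (α : V → ℕ) (β : E → ℕ) :
    (∃ f : E → ℕ × ℕ,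
        (∀ e, (f e).1 + (f e).2 = β e) ∧
        (∀ v, ∑ e, ((if (ends e).1 = v then (f e).1 else 0) +
            (if (ends e).2 = v then (f e).2 else 0)) = α v)) ↔
      ((∑ v, α v = ∑ e, β e) ∧
        ∀ S : Finset V,
          ∑ e ∈ Finset.univ.filter (fun e => (ends e).1 ∈ S ∧ (ends e).2 ∈ S), β e
            ≤ ∑ v ∈ S, α v) := by
  classical
  constructor
  · rintro ⟨f, hf, hv⟩
    have key : ∀ S : Finset V, ∑ v ∈ S, α v = ∑ e, ((if (ends e).1 ∈ S then (f e).1 else 0) +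
            (if (ends e).2 ∈ S then (f e).2 else 0)) := by
      intro S
      simp_rw [← hv]
      rw [Finset.sum_comm]
      refine Finset.sum_congr rfl fun e _ => ?_
      rw [Finset.sum_add_distrib, Finset.sum_ite_eq, Finset.sum_ite_eq]
    constructor
    · rw [key]
      simp [hf]
    · intro S
      rw [key, Finset.sum_filter]
      refine Finset.sum_le_sum fun e _ => ?_
      have := hf e
      split_ifs <;> first | omega | tauto
  · rintro ⟨h1, h2⟩
    let t : (Σ e, Fin (β e)) → Finset (Σ v, Fin (α v)) := fun x =>
      Finset.univ.filter fun y => (ends x.1).1 = y.1 ∨ (ends x.1).2 = y.1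
    have cardA : ∀ S : Finset V,
        (Finset.univ.filter fun y : (Σ v, Fin (α v)) => y.1 ∈ S).card = ∑ v ∈ S, α v := by
      intro S
      rw [Finset.card_filter, Fintype.sum_sigma]
      simp [apply_ite Finset.card]
    have cardB : ∀ S : Finset V,
        (Finset.univ.filter fun x : (Σ e, Fin (β e)) =>
          (ends x.1).1 ∈ S ∧ (ends x.1).2 ∈ S).card =
        ∑ e ∈ Finset.univ.filter (fun e => (ends e).1 ∈ S ∧ (ends e).2 ∈ S), β e := by
      intro S
      rw [Finset.card_filter, Fintype.sum_sigma, Finset.sum_filter]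
      simp [apply_ite Finset.card]
    have hall : ∀ s : Finset (Σ e, Fin (β e)), s.card ≤ (s.biUnion t).card := by
      intro s
      let S : Finset V := s.image (fun x => (ends x.1).1) ∪ s.image (fun x => (ends x.1).2)
      have hs : s ⊆ Finset.univ.filter fun x : (Σ e, Fin (β e)) =>
          (ends x.1).1 ∈ S ∧ (ends x.1).2 ∈ S := by
        intro x hx
        rw [Finset.mem_filter]
        exact ⟨Finset.mem_univ _,
          Finset.mem_union_left _ (Finset.mem_image_of_mem (fun x => (ends x.1).1) hx),
          Finset.mem_union_right _ (Finset.mem_image_of_mem (fun x => (ends x.1).2) hx)⟩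
      have ht : (Finset.univ.filter fun y : (Σ v, Fin (α v)) => y.1 ∈ S) ⊆ s.biUnion t := by
        intro y hy
        rw [Finset.mem_filter, Finset.mem_union, Finset.mem_image, Finset.mem_image] at hy
        rw [Finset.mem_biUnion]
        rcases hy.2 with ⟨x, hx, h⟩ | ⟨x, hx, h⟩
        · exact ⟨x, hx, Finset.mem_filter.2 ⟨Finset.mem_univ _, Or.inl h⟩⟩
        · exact ⟨x, hx, Finset.mem_filter.2 ⟨Finset.mem_univ _, Or.inr h⟩⟩
      calc s.card ≤ _ := Finset.card_le_card hs
        _ ≤ ∑ v ∈ S, α v := by rw [cardB]; exact h2 S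
        _ ≤ _ := by rw [← cardA]; exact Finset.card_le_card ht
    obtain ⟨g, gi, gt⟩ := (Finset.all_card_le_biUnion_card_iff_exists_injective t).1 hall
    have gb : Function.Bijective g := by
      rw [Fintype.bijective_iff_injective_and_card]
      refine ⟨gi, ?_⟩
      simp [Fintype.card_sigma, h1]
    have gt' : ∀ x, (ends x.1).1 = (g x).1 ∨ (ends x.1).2 = (g x).1 := fun x =>
      (Finset.mem_filter.1 (gt x)).2
    refine ⟨fun e => (∑ i, if (ends e).1 = (g ⟨e, i⟩).1 then 1 else 0,
      ∑ i, if (ends e).1 = (g ⟨e, i⟩).1 then 0 else 1), ?_, ?_⟩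
    · intro e
      simp only
      rw [← Finset.sum_add_distrib]
      calc _ = ∑ i : Fin (β e), 1 := Finset.sum_congr rfl fun i _ => by split_ifs <;> rfl
        _ = _ := by simp
    · intro v
      calc _ = ∑ e, ∑ i : Fin (β e), (if (g ⟨e, i⟩).1 = v then 1 else 0) := by
            refine Finset.sum_congr rfl fun e _ => ?_
            simp only
            have hite : ∀ (p : Prop) [Decidable p] (h : Fin (β e) → ℕ),
                (if p then ∑ i, h i else 0) = ∑ i, if p then h i else 0 := by
              intro p _ h
              split_ifs <;> simp
            rw [hite, hite, ← Finset.sum_add_distrib]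
            refine Finset.sum_congr rfl fun i _ => ?_
            have := gt' ⟨e, i⟩
            simp only at this
            grind
        _ = ∑ x, (if (g x).1 = v then 1 else 0) := by rw [Fintype.sum_sigma]
        _ = ∑ y : (Σ v, Fin (α v)), (if y.1 = v then 1 else 0) :=
            gb.sum_comp (fun y => if y.1 = v then 1 else 0)
        _ = α v := by rw [Fintype.sum_sigma]; simp [apply_ite Finset.card]
end

section
/- Let (V, E, ends) be a finite multigraph, let α : V → ℕ and β : E → ℕ, and let u ∈ V. Assume that (i) Σ_{v∈V} α(v) = Σ_{e∈E} β(e) and (ii) for every subset S ⊆ V, Σ_{e∈E_S} β(e) ≤ Σ_{v∈S} α(v). Then every (α,β)-biorientation is accessible from u if and only if (iii) for every nonempty subset S ⊆ V with u ∉ S, Σ_{e∈E_S} β(e) < Σ_{v∈S} α(v). -/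
theorem biorient_exists {V E : Type*} [Fintype V] [Fintype E] [DecidableEq V]
    (ends : E → V × V) (α : V → ℕ) (β : E → ℕ)
    (h1 : ∑ v, α v = ∑ e, β e)
    (h2 : ∀ S : Finset V,
      ∑ e ∈ Finset.univ.filter (fun e => (ends e).1 ∈ S ∧ (ends e).2 ∈ S), β e
        ≤ ∑ v ∈ S, α v) :
    ∃ f : E → ℕ × ℕ,
        (∀ e, (f e).1 + (f e).2 = β e) ∧
        (∀ v, ∑ e, ((if (ends e).1 = v then (f e).1 else 0) +
            (if (ends e).2 = v then (f e).2 else 0)) = α v) := by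
  classical
  let t : (Σ e, Fin (β e)) → Finset (Σ v, Fin (α v)) := fun x =>
    ({(ends x.1).1, (ends x.1).2} : Finset V).sigma (fun _ => Finset.univ)
  have hall : ∀ A : Finset (Σ e, Fin (β e)), A.card ≤ (A.biUnion t).card := by
    intro A
    let S : Finset V := A.biUnion (fun x => {(ends x.1).1, (ends x.1).2})
    have hS : A.biUnion t = S.sigma (fun _ => Finset.univ) := by
      ext p
      simp [t, S]
    have hA : A ⊆ (Finset.univ.filter
        (fun e => (ends e).1 ∈ S ∧ (ends e).2 ∈ S)).sigma (fun _ => Finset.univ) := by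
      intro x hx
      simp only [Finset.mem_sigma, Finset.mem_filter, Finset.mem_univ, true_and, and_true, S,
        Finset.mem_biUnion]
      exact ⟨⟨x, hx, by simp⟩, ⟨x, hx, by simp⟩⟩
    have hc := Finset.card_le_card hA
    rw [Finset.card_sigma] at hc
    rw [hS, Finset.card_sigma]
    simp only [Finset.card_univ, Fintype.card_fin] at hc ⊢
    exact hc.trans (h2 S)
  obtain ⟨m, hinj, hm⟩ := (Finset.all_card_le_biUnion_card_iff_exists_injective t).1 hall
  have hbij : Function.Bijective m := by
    rw [Fintype.bijective_iff_injective_and_card]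
    exact ⟨hinj, by simp [h1]⟩
  refine ⟨fun e => (∑ i : Fin (β e), if (m ⟨e, i⟩).1 = (ends e).1 then 1 else 0,
    ∑ i : Fin (β e), if (m ⟨e, i⟩).1 = (ends e).1 then 0 else 1), ?_, ?_⟩
  · intro e
    simp only
    rw [← Finset.sum_add_distrib]
    have : ∀ i : Fin (β e), ((if (m ⟨e, i⟩).1 = (ends e).1 then 1 else 0) +
      (if (m ⟨e, i⟩).1 = (ends e).1 then 0 else 1) : ℕ) = 1 := by
      intro i; split_ifs <;> rfl
    simp [this]
  · intro v
    have key : ∀ e, ((if (ends e).1 = v then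
          (∑ i : Fin (β e), if (m ⟨e, i⟩).1 = (ends e).1 then 1 else 0) else 0) +
        (if (ends e).2 = v then
          (∑ i : Fin (β e), if (m ⟨e, i⟩).1 = (ends e).1 then 0 else 1) else 0) : ℕ)
        = ∑ i : Fin (β e), if (m ⟨e, i⟩).1 = v then 1 else 0 := by
      intro e
      have hi : ∀ i : Fin (β e), (m ⟨e, i⟩).1 = (ends e).1 ∨ (m ⟨e, i⟩).1 = (ends e).2 := by
        intro i
        have := hm ⟨e, i⟩
        simpa [t] using this
      have hz : ∀ (P : Prop) [Decidable P] (g : Fin (β e) → ℕ),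
          (if P then ∑ i, g i else 0) = ∑ i, if P then g i else 0 := by
        intro P _ g
        split_ifs <;> simp
      rw [hz, hz, ← Finset.sum_add_distrib]
      refine Finset.sum_congr rfl fun i _ => ?_
      have := hi i
      grind
    simp only [key]
    rw [← Fintype.sum_sigma' (fun e (i : Fin (β e)) => if (m ⟨e, i⟩).1 = v then 1 else 0)]
    rw [hbij.sum_comp (fun p : (Σ v, Fin (α v)) => if p.1 = v then 1 else 0)]
    rw [Fintype.sum_sigma]
    simp [apply_ite Finset.card]

theorem biorient_sum {V E : Type*} [Fintype V] [Fintype E] [DecidableEq V]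
    (ends : E → V × V) (α : V → ℕ) (f : E → ℕ × ℕ)
    (hf : ∀ v, ∑ e, ((if (ends e).1 = v then (f e).1 else 0) +
            (if (ends e).2 = v then (f e).2 else 0)) = α v) (S : Finset V) :
    ∑ v ∈ S, α v = ∑ e, ((if (ends e).1 ∈ S then (f e).1 else 0) +
            (if (ends e).2 ∈ S then (f e).2 else 0)) := by
  simp only [← hf]
  rw [Finset.sum_comm]
  refine Finset.sum_congr rfl fun e _ => ?_
  rw [Finset.sum_add_distrib]
  simp

/-- **Accessibility criterion for (α,β)-biorientations of a finite multigraph.**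
A finite multigraph is given by finite types `V` and `E` and `ends : E → V × V`.
An `(α,β)`-biorientation is `f : E → ℕ × ℕ` (half-edge weights, first component at the first
endpoint) with the two weights of each edge `e` adding up to `β e` and the total ingoing
weight at each vertex `v` equal to `α v`.  An edge `e` with `ends e = (x,y)` can be traversed
from `x` to `y` when `(f e).2 > 0` and from `y` to `x` when `(f e).1 > 0`; the biorientation
is accessible from `u` when every vertex is reachable from `u` by such traversals.
Assuming the existence conditions (i) `Σ_v α v = Σ_e β e` and
(ii) `Σ_{e ∈ E_S} β e ≤ Σ_{v ∈ S} α v` for all `S`, every `(α,β)`-biorientation is accessible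
from `u` iff (iii) for every nonempty `S` not containing `u`,
`Σ_{e ∈ E_S} β e < Σ_{v ∈ S} α v`. -/
theorem biorientations_accessible_iff {V E : Type*} [Fintype V] [Fintype E] [DecidableEq V]
    (ends : E → V × V) (α : V → ℕ) (β : E → ℕ) (u : V)
    (h1 : ∑ v, α v = ∑ e, β e)
    (h2 : ∀ S : Finset V,
      ∑ e ∈ Finset.univ.filter (fun e => (ends e).1 ∈ S ∧ (ends e).2 ∈ S), β e
        ≤ ∑ v ∈ S, α v) :
    (∀ f : E → ℕ × ℕ,
        (∀ e, (f e).1 + (f e).2 = β e) →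
        (∀ v, ∑ e, ((if (ends e).1 = v then (f e).1 else 0) +
            (if (ends e).2 = v then (f e).2 else 0)) = α v) →
        ∀ w : V, Relation.ReflTransGen
          (fun x y => ∃ e, (ends e = (x, y) ∧ 0 < (f e).2) ∨ (ends e = (y, x) ∧ 0 < (f e).1))
          u w) ↔
      (∀ S : Finset V, S.Nonempty → u ∉ S →
        ∑ e ∈ Finset.univ.filter (fun e => (ends e).1 ∈ S ∧ (ends e).2 ∈ S), β e
          < ∑ v ∈ S, α v) := by
  constructor
  · intro H S ⟨w, hw⟩ hu
    refine lt_of_le_of_ne (h2 S) fun heq => ?_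
    obtain ⟨f, hf1, hf2⟩ := biorient_exists ends α β h1 h2
    rw [biorient_sum ends α f hf2 S, Finset.sum_filter] at heq
    have hle : ∀ e ∈ Finset.univ, (if (ends e).1 ∈ S ∧ (ends e).2 ∈ S then β e else 0) ≤
        (if (ends e).1 ∈ S then (f e).1 else 0) + (if (ends e).2 ∈ S then (f e).2 else 0) := by
      intro e _
      have := hf1 e
      grind
    have hall := (Finset.sum_eq_sum_iff_of_le hle).1 heq
    have hout : ∀ x, Relation.ReflTransGen
          (fun x y => ∃ e, (ends e = (x, y) ∧ 0 < (f e).2) ∨ (ends e = (y, x) ∧ 0 < (f e).1))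
          u x → x ∉ S := by
      intro x hx
      induction hx with
      | refl => exact hu
      | tail _ hs ih =>
        obtain ⟨e, he⟩ := hs
        have h3 := hall e (Finset.mem_univ e)
        intro hc
        rcases he with ⟨h, hp⟩ | ⟨h, hp⟩
        · simp [h, hc, ih] at h3
          omega
        · simp [h, hc, ih] at h3
          omega
    exact hout w (H f hf1 hf2 w) hw
  · intro H f hf1 hf2 w
    by_contra hw
    classical
    let R : V → V → Prop := fun x y =>
      ∃ e, (ends e = (x, y) ∧ 0 < (f e).2) ∨ (ends e = (y, x) ∧ 0 < (f e).1)
    let S : Finset V := Finset.univ.filter (fun x => ¬ Relation.ReflTransGen R u x)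
    have hS : ∀ x, x ∈ S ↔ ¬ Relation.ReflTransGen R u x := fun x => by simp [S]
    have hlt := H S ⟨w, (hS w).2 hw⟩ (fun h => (hS u).1 h Relation.ReflTransGen.refl)
    rw [biorient_sum ends α f hf2 S, Finset.sum_filter] at hlt
    refine absurd hlt (not_lt.2 (Finset.sum_le_sum fun e _ => ?_))
    have hb := hf1 e
    have a1 : (ends e).1 ∉ S → (ends e).2 ∈ S → (f e).2 = 0 := by
      intro p q
      rw [hS] at p q
      by_contra h
      exact q ((not_not.1 p).tail ⟨e, Or.inl ⟨rfl, Nat.pos_of_ne_zero h⟩⟩)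
    have a2 : (ends e).2 ∉ S → (ends e).1 ∈ S → (f e).1 = 0 := by
      intro p q
      rw [hS] at p q
      by_contra h
      exact q ((not_not.1 p).tail ⟨e, Or.inr ⟨rfl, Nat.pos_of_ne_zero h⟩⟩)
    by_cases p : (ends e).1 ∈ S <;> by_cases q : (ends e).2 ∈ S <;> simp_all
end

section
/- Let p, q, e be positive integers and let i, j be natural numbers with i + e ≤ p and j + e ≤ q. Then, in ℚ, Σ_{a=e}^{min(p−i, q−j)} a·γ(p,i,a)·γ(q,j,a) = 2·β(p,i,e)·β(q,j,e)/(p+q−i−j) if i + j ≡ p + q (mod 2), and Σ_{a=e}^{min(p−i, q−j)} a·γ(p,i,a)·γ(q,j,a) = 0 otherwise. -/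
/-- `γ(p,i,a) = p!/(i!·((p−i−a)/2)!·((p−i+a)/2)!)` if `a ≤ p−i` and `p−i−a` is even,
and `0` otherwise. -/
noncomputable def gammaCoef (p i a : ℕ) : ℚ :=
  if i + a ≤ p ∧ (p - i - a) % 2 = 0 then
    (p.factorial : ℚ) /
      ((i.factorial : ℚ) * (((p - i - a) / 2).factorial : ℚ) *
        (((p - i + a) / 2).factorial : ℚ))
  else 0

/-- `β(p,i,e) = p!/(i!·⌊(p−i−e)/2⌋!·⌊(p−i+e−1)/2⌋!)` if `i + e ≤ p`, and `0` otherwise. -/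
noncomputable def betaCoef (p i e : ℕ) : ℚ :=
  if i + e ≤ p then
    (p.factorial : ℚ) /
      ((i.factorial : ℚ) * (((p - i - e) / 2).factorial : ℚ) *
        (((p - i + e - 1) / 2).factorial : ℚ))
  else 0

lemma beta_even (p i a x : ℕ) (ha : 0 < a) (h : p = i + a + 2 * x) :
    betaCoef p i a = gammaCoef p i a * (x + a) ∧ betaCoef p i (a+1) = gammaCoef p i a * x := by
  subst h
  obtain ⟨b, rfl⟩ : ∃ b, a = b + 1 := ⟨a - 1, by omega⟩
  have e1 : (i + (b+1) + 2*x - i - (b+1)) / 2 = x := by omega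
  have e1' : (i + (b+1) + 2*x - i - (b+1)) % 2 = 0 := by omega
  have e2 : (i + (b+1) + 2*x - i + (b+1)) / 2 = x + b + 1 := by omega
  have e3 : (i + (b+1) + 2*x - i + (b+1) - 1) / 2 = x + b := by omega
  have f1 : (x.factorial : ℚ) ≠ 0 := by exact_mod_cast x.factorial_ne_zero
  have f2 : ((x+b).factorial : ℚ) ≠ 0 := by exact_mod_cast (x+b).factorial_ne_zero
  have f3 : (i.factorial : ℚ) ≠ 0 := by exact_mod_cast i.factorial_ne_zero
  have f4 : ((x:ℚ)+b+1) ≠ 0 := by positivity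
  have g : gammaCoef (i + (b+1) + 2*x) i (b+1) = ((i + (b+1) + 2*x).factorial : ℚ) /
      (i.factorial * x.factorial * ((x + b + 1) * (x+b).factorial)) := by
    unfold gammaCoef
    rw [if_pos ⟨by omega, e1'⟩, e1, e2, Nat.factorial_succ (x+b)]
    push_cast; rfl
  rw [g]
  constructor
  · unfold betaCoef
    rw [if_pos (by omega), e1, e3]
    push_cast
    field_simp
    try ring
  · unfold betaCoef
    rcases x with _ | y
    · rw [if_neg (by omega)]; simp
    · have e4 : (i + (b+1) + 2*(y+1) - i - (b+1+1)) / 2 = y := by omega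
      have e5 : (i + (b+1) + 2*(y+1) - i + (b+1+1) - 1) / 2 = y + 1 + b + 1 := by omega
      rw [if_pos (by omega), e4, e5, Nat.factorial_succ (y+1+b), Nat.factorial_succ y]
      have f5 : (y.factorial : ℚ) ≠ 0 := by exact_mod_cast y.factorial_ne_zero
      push_cast at *
      field_simp

lemma beta_odd (p i a x : ℕ) (h : p = i + a + 2 * x + 1) :
    gammaCoef p i a = 0 ∧ betaCoef p i (a+1) = betaCoef p i a := by
  subst h
  constructor
  · unfold gammaCoef
    rw [if_neg (by omega)]
  · unfold betaCoef
    rw [if_pos (by omega), if_pos (by omega)]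
    have e1 : (i + a + 2*x + 1 - i - (a+1)) / 2 = x := by omega
    have e2 : (i + a + 2*x + 1 - i - a) / 2 = x := by omega
    have e3 : (i + a + 2*x + 1 - i + (a+1) - 1) / 2 = x + a := by omega
    have e4 : (i + a + 2*x + 1 - i + a - 1) / 2 = x + a := by omega
    rw [e1, e2, e3, e4]

lemma tele (f F : ℕ → ℚ) (e M : ℕ) (h : e ≤ M)
    (hf : ∀ a, e ≤ a → a ≤ M → f a = F a - F (a+1)) :
    ∑ a ∈ Finset.Icc e M, f a = F e - F (M+1) := by
  induction M, h using Nat.le_induction with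
  | base => simpa using hf e le_rfl le_rfl
  | succ n hn ih =>
    rw [Finset.sum_Icc_succ_top (by omega), ih (fun a h1 h2 => hf a h1 (by omega)),
      hf (n+1) (by omega) le_rfl]
    ring

/-- For positive integers `p, q, e` and naturals `i, j` with `i + e ≤ p` and `j + e ≤ q`,
`Σ_{a=e}^{min(p−i,q−j)} a·γ(p,i,a)·γ(q,j,a)` equals `2·β(p,i,e)·β(q,j,e)/(p+q−i−j)` when
`i + j ≡ p + q (mod 2)`, and `0` otherwise. -/
theorem sum_gamma_eq_beta (p q e i j : ℕ) (hp : 0 < p) (hq : 0 < q) (he : 0 < e)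
    (hi : i + e ≤ p) (hj : j + e ≤ q) :
    (∑ a ∈ Finset.Icc e (min (p - i) (q - j)),
        (a : ℚ) * gammaCoef p i a * gammaCoef q j a) =
      if (i + j) % 2 = (p + q) % 2 then
        2 * betaCoef p i e * betaCoef q j e / ((p : ℚ) + q - i - j)
      else 0 := by
  split_ifs with hpar
  · rw [tele _ (fun a => 2 * betaCoef p i a * betaCoef q j a / ((p : ℚ) + q - i - j)) e _
      (by omega)]
    · have : betaCoef p i (min (p-i) (q-j) + 1) * betaCoef q j (min (p-i) (q-j) + 1) = 0 := by
        rcases le_total (p-i) (q-j) with h | h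
        · rw [min_eq_left h]; unfold betaCoef; rw [if_neg (by omega), zero_mul]
        · rw [min_eq_right h]; unfold betaCoef
          rw [if_neg (show ¬ (j + (q - j + 1) ≤ q) by omega), mul_zero]
      simp only [mul_assoc, this]
      simp
    · intro a h1 h2
      have ha1 : i + a ≤ p := by omega
      have ha2 : j + a ≤ q := by omega
      rcases Nat.even_or_odd' (p - i - a) with ⟨x, hx | hx⟩
      · obtain ⟨y, hy⟩ : ∃ y, q = j + a + 2 * y := ⟨(q - j - a)/2, by omega⟩
        have hx' : p = i + a + 2 * x := by omega
        obtain ⟨u1, u2⟩ := beta_even p i a x (by omega) hx'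
        obtain ⟨v1, v2⟩ := beta_even q j a y (by omega) hy
        rw [u1, u2, v1, v2]
        have hd : (p : ℚ) + q - i - j = 2 * (x + y + a) := by
          rw [hx', hy]; push_cast; ring
        have ha : (0:ℚ) < a := by exact_mod_cast (by omega : 0 < a)
        have hne : (x:ℚ) + y + a ≠ 0 := by positivity
        rw [hd]
        field_simp
        ring
      · obtain ⟨y, hy⟩ : ∃ y, q = j + a + 2 * y + 1 := ⟨(q - j - a)/2, by omega⟩
        obtain ⟨u1, u2⟩ := beta_odd p i a x (by omega)
        obtain ⟨v1, v2⟩ := beta_odd q j a y hy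
        rw [u1, u2, v2]; simp
  · apply Finset.sum_eq_zero
    intro a ha
    rw [Finset.mem_Icc] at ha
    by_cases h : (p - i - a) % 2 = 0
    · have : gammaCoef q j a = 0 := by unfold gammaCoef; rw [if_neg (by omega)]
      rw [this, mul_zero]
    · have : gammaCoef p i a = 0 := by unfold gammaCoef; rw [if_neg (by omega)]
      rw [this, mul_zero, zero_mul]
end

section
/- Let p, q, e be positive integers and let i, j be natural numbers with i + e ≤ p, j + e ≤ q, e ≡ p − i (mod 2) and e ≡ q − j (mod 2). Then, in ℚ, (2/(p+q−i−j))·(β(p,i,e)·β(q,j,e) − β(p,i,e+1)·β(q,j,e+1)) = e·γ(p,i,e)·γ(q,j,e). -/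
lemma gamma_aux (m i e : ℕ) : gammaCoef (i + e + 2 * m) i e =
    ((i + e + 2 * m).factorial : ℚ) / ((i.factorial : ℚ) * (m.factorial : ℚ) *
      ((m + e).factorial : ℚ)) := by
  unfold gammaCoef
  rw [if_pos (by omega), show (i + e + 2 * m - i - e) / 2 = m by omega,
    show (i + e + 2 * m - i + e) / 2 = m + e by omega]

lemma beta_aux (m i e : ℕ) (he : 0 < e) : betaCoef (i + e + 2 * m) i e =
    ((m : ℚ) + e) * gammaCoef (i + e + 2 * m) i e := by
  rw [gamma_aux]
  unfold betaCoef
  obtain ⟨k, rfl⟩ : ∃ k, e = k + 1 := ⟨e - 1, by omega⟩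
  rw [if_pos (by omega), show (i + (k + 1) + 2 * m - i - (k + 1)) / 2 = m by omega,
    show (i + (k + 1) + 2 * m - i + (k + 1) - 1) / 2 = m + k by omega,
    show m + (k + 1) = (m + k) + 1 by omega, Nat.factorial_succ (m + k)]
  have h1 : (i.factorial : ℚ) ≠ 0 := by positivity
  have h2 : (m.factorial : ℚ) ≠ 0 := by positivity
  have h3 : ((m + k).factorial : ℚ) ≠ 0 := by positivity
  have h4 : ((m : ℚ) + k + 1) ≠ 0 := by positivity
  push_cast
  field_simp
  ring

lemma beta_aux_succ (m i e : ℕ) : betaCoef (i + e + 2 * m) i (e + 1) =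
    (m : ℚ) * gammaCoef (i + e + 2 * m) i e := by
  rw [gamma_aux]
  unfold betaCoef
  rcases m with _ | m
  · rw [if_neg (by omega)]
    simp
  · rw [if_pos (by omega), show (i + e + 2 * (m + 1) - i - (e + 1)) / 2 = m by omega,
      show (i + e + 2 * (m + 1) - i + (e + 1) - 1) / 2 = m + 1 + e by omega,
      Nat.factorial_succ m]
    have h1 : (i.factorial : ℚ) ≠ 0 := by positivity
    have h2 : (m.factorial : ℚ) ≠ 0 := by positivity
    have h3 : ((m + 1 + e).factorial : ℚ) ≠ 0 := by positivity
    have h4 : ((m : ℚ) + 1) ≠ 0 := by positivity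
    push_cast
    field_simp

/-- For positive integers `p, q, e` and naturals `i, j` with `i + e ≤ p`, `j + e ≤ q`,
`e ≡ p − i (mod 2)` and `e ≡ q − j (mod 2)`:
`(2/(p+q−i−j))·(β(p,i,e)·β(q,j,e) − β(p,i,e+1)·β(q,j,e+1)) = e·γ(p,i,e)·γ(q,j,e)`. -/
theorem beta_diff_eq_gamma (p q e i j : ℕ) (hp : 0 < p) (hq : 0 < q) (he : 0 < e)
    (hi : i + e ≤ p) (hj : j + e ≤ q)
    (hpar1 : e % 2 = (p - i) % 2) (hpar2 : e % 2 = (q - j) % 2) :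
    (2 / ((p : ℚ) + q - i - j)) *
        (betaCoef p i e * betaCoef q j e - betaCoef p i (e + 1) * betaCoef q j (e + 1)) =
      (e : ℚ) * gammaCoef p i e * gammaCoef q j e := by
  obtain ⟨m, rfl⟩ : ∃ m, p = i + e + 2 * m := ⟨(p - i - e) / 2, by omega⟩
  obtain ⟨n, rfl⟩ : ∃ n, q = j + e + 2 * n := ⟨(q - j - e) / 2, by omega⟩
  rw [beta_aux m i e he, beta_aux n j e he, beta_aux_succ, beta_aux_succ]
  generalize gammaCoef (i + e + 2 * m) i e = x
  generalize gammaCoef (j + e + 2 * n) j e = y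
  have he' : (0 : ℚ) < e := by exact_mod_cast he
  have h : ((m : ℚ) + n + e) ≠ 0 := by positivity
  have h2 : (((i + e + 2 * m : ℕ) : ℚ) + ((j + e + 2 * n : ℕ) : ℚ) - i - j)
      = 2 * ((m : ℚ) + n + e) := by push_cast; ring
  rw [h2]
  field_simp
  ring
end

section
/- For every integer d ≥ 1 and every finite set Δ of integers each ≥ d, the d-system for Δ has exactly one solution (W_{−2}, W_{−1}, …, W_d). -/
open MvPowerSeries in
/-- `W : ℤ → ℚ[[x_i : i ∈ Δ]]` (only the values `W_{−2}, …, W_d` are relevant) is a solution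
of the `d`-system for `Δ` if: `W_{−2} = 1`; the constant term of `W_j` vanishes for
`−1 ≤ j ≤ d`; for `−2 ≤ j ≤ d−3`, `W_j = h_{j+2}(W_1, …, W_{d−1})`, i.e. the sum over all
compositions `(c_1,…,c_r)` of `j+2` into positive parts of `W_{c_1}·…·W_{c_r}`; and for
`d−2 ≤ j ≤ d`, `W_j = [u^{j+2}] Σ_{i∈Δ} x_i u^i (1 + W_0 + u^{−1}W_{−1} + u^{−2})^{i−1}`,
written out as the sum over `i ∈ Δ` of `x_i` times the sum over pairs `(b,c)` of naturals
with `b + 2c = i − j − 2` and `b + c ≤ i − 1` of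
`(i−1)!/((i−1−b−c)!·b!·c!)·(1+W_0)^{i−1−b−c}·W_{−1}^b`. -/
def IsDSystemSolution (d : ℕ) (Δ : Finset ℕ) (W : ℤ → MvPowerSeries ↥Δ ℚ) : Prop :=
  W (-2) = 1 ∧
  (∀ j : ℤ, -1 ≤ j → j ≤ (d : ℤ) → constantCoeff (σ := ↥Δ) (R := ℚ) (W j) = 0) ∧
  (∀ j : ℤ, -2 ≤ j → j ≤ (d : ℤ) - 3 →
    W j = ∑ c : Composition (j + 2).toNat, ((c.blocks.map (fun k => W (k : ℤ))).prod)) ∧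
  (∀ j : ℤ, (d : ℤ) - 2 ≤ j → j ≤ (d : ℤ) →
    W j = ∑ i ∈ Δ.attach,
      MvPowerSeries.X i *
        ∑ bc ∈ (Finset.range ((i : ℕ) + 1) ×ˢ Finset.range ((i : ℕ) + 1)).filter
            (fun bc => (bc.1 : ℤ) + 2 * (bc.2 : ℤ) = ((i : ℕ) : ℤ) - j - 2 ∧
              bc.1 + bc.2 ≤ (i : ℕ) - 1),
          (C (σ := ↥Δ) (R := ℚ) ((((i : ℕ) - 1).factorial : ℚ) /
                ((((i : ℕ) - 1 - bc.1 - bc.2).factorial : ℚ) * (bc.1.factorial : ℚ) *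
                  (bc.2.factorial : ℚ)))) *
            (1 + W 0) ^ ((i : ℕ) - 1 - bc.1 - bc.2) * (W (-1)) ^ bc.1)

open MvPowerSeries in
noncomputable def dSysX (Δ : Finset ℕ) (W : ℤ → MvPowerSeries ↥Δ ℚ) (j : ℤ) :
    MvPowerSeries ↥Δ ℚ :=
  ∑ i ∈ Δ.attach,
      MvPowerSeries.X i *
        ∑ bc ∈ (Finset.range ((i : ℕ) + 1) ×ˢ Finset.range ((i : ℕ) + 1)).filter
            (fun bc => (bc.1 : ℤ) + 2 * (bc.2 : ℤ) = ((i : ℕ) : ℤ) - j - 2 ∧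
              bc.1 + bc.2 ≤ (i : ℕ) - 1),
          (C (σ := ↥Δ) (R := ℚ) ((((i : ℕ) - 1).factorial : ℚ) /
                ((((i : ℕ) - 1 - bc.1 - bc.2).factorial : ℚ) * (bc.1.factorial : ℚ) *
                  (bc.2.factorial : ℚ)))) *
            (1 + W 0) ^ ((i : ℕ) - 1 - bc.1 - bc.2) * (W (-1)) ^ bc.1

noncomputable def dSysC (Δ : Finset ℕ) (W : ℤ → MvPowerSeries ↥Δ ℚ) (j : ℤ) :
    MvPowerSeries ↥Δ ℚ :=
  ∑ c : Composition (j + 2).toNat, ((c.blocks.map (fun k : ℕ => W (k : ℤ))).prod)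

theorem dSys_bridge {R : Type*} [CommRing R] (W : ℤ → R) (l : List ℕ) :
    (l.map (fun k => W (k : ℤ))).prod = (l.map (fun k : ℕ => W (k : ℤ))).prod := by
  induction l with
  | nil => simp
  | cons a l ih =>
    simp at ih ⊢
    rw [ih]

noncomputable def dSysR (d : ℕ) (Δ : Finset ℕ) (W : ℤ → MvPowerSeries ↥Δ ℚ) (j : ℤ) :
    MvPowerSeries ↥Δ ℚ :=
  if j ≤ (d : ℤ) - 3 then dSysC Δ W j else dSysX Δ W j

/-- agreement of power series in all degrees below `n` -/
def Agr {σ : Type*} (n : ℕ) (A B : MvPowerSeries σ ℚ) : Prop :=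
  (n : ℕ∞) ≤ (A - B).order

section agr
variable {σ : Type*} {n : ℕ} {A B A' B' : MvPowerSeries σ ℚ}

theorem agr_of_mul (p q : ℕ) (hp : (p : ℕ∞) ≤ A.order) (hq : (q : ℕ∞) ≤ B.order) :
    ((p + q : ℕ) : ℕ∞) ≤ (A * B).order := by
  push_cast
  exact (add_le_add hp hq).trans MvPowerSeries.le_order_mul

theorem agr_of_add (hp : (n : ℕ∞) ≤ A.order) (hq : (n : ℕ∞) ≤ B.order) :
    (n : ℕ∞) ≤ (A + B).order :=
  (le_min hp hq).trans MvPowerSeries.min_order_le_add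

theorem Agr.rfl : Agr n A A := by
  simp [Agr]

theorem Agr.add (h : Agr n A B) (h' : Agr n A' B') : Agr n (A + A') (B + B') := by
  unfold Agr at *
  rw [show A + A' - (B + B') = (A - B) + (A' - B') by ring]
  exact agr_of_add h h'

theorem Agr.mul (h : Agr n A B) (h' : Agr n A' B') : Agr n (A * A') (B * B') := by
  unfold Agr at *
  rw [show A * A' - (B * B') = (A - B) * A' + B * (A' - B') by ring]
  refine agr_of_add ?_ ?_
  · simpa using agr_of_mul n 0 h (B := A') (by simp)
  · simpa using agr_of_mul 0 n (A := B) (by simp) h'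

theorem Agr.mul_succ (h : Agr n A B) (h' : Agr n A' B') (hA : (1 : ℕ∞) ≤ A'.order)
    (hB : (1 : ℕ∞) ≤ B.order) : Agr (n + 1) (A * A') (B * B') := by
  unfold Agr at *
  rw [show A * A' - (B * B') = (A - B) * A' + B * (A' - B') by ring]
  refine agr_of_add ?_ ?_
  · exact agr_of_mul n 1 h (by simpa using hA)
  · rw [add_comm n 1]
    exact agr_of_mul 1 n (by simpa using hB) h'

theorem Agr.pow (h : Agr n A B) (k : ℕ) : Agr n (A ^ k) (B ^ k) := by
  induction k with
  | zero => simpa using Agr.rfl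
  | succ k ih => rw [pow_succ, pow_succ]; exact ih.mul h

theorem Agr.sum {ι : Type*} (s : Finset ι) {f g : ι → MvPowerSeries σ ℚ}
    (h : ∀ i ∈ s, Agr n (f i) (g i)) : Agr n (∑ i ∈ s, f i) (∑ i ∈ s, g i) := by
  classical
  induction s using Finset.induction_on with
  | empty => simpa using Agr.rfl
  | insert a s ha ih =>
    rw [Finset.sum_insert ha, Finset.sum_insert ha]
    exact (h a (by simp)).add (ih fun i hi => h i (by simp [hi]))

theorem one_le_order_iff : (1 : ℕ∞) ≤ A.order ↔ MvPowerSeries.constantCoeff A = 0 := by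
  exact MvPowerSeries.one_le_order_iff_constCoeff_eq_zero

theorem Agr.mul_X (h : Agr n A B) (i : σ) :
    Agr (n + 1) (MvPowerSeries.X i * A) (MvPowerSeries.X i * B) := by
  unfold Agr at *
  rw [← mul_sub, add_comm n 1]
  refine agr_of_mul 1 n ?_ h
  have := (one_le_order_iff (A := (MvPowerSeries.X i : MvPowerSeries σ ℚ))).2 (by simp)
  simpa using this

theorem Agr.coeff (h : Agr n A B) (m : σ →₀ ℕ) (hm : m.degree < n) :
    MvPowerSeries.coeff m A = MvPowerSeries.coeff m B := by
  rw [← sub_eq_zero, ← map_sub]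
  exact MvPowerSeries.coeff_of_lt_order (lt_of_lt_of_le (by exact_mod_cast hm) h)

theorem agr_of_coeff (h : ∀ m : σ →₀ ℕ, m.degree < n →
    MvPowerSeries.coeff m A = MvPowerSeries.coeff m B) : Agr n A B := by
  refine MvPowerSeries.le_order fun m hm => ?_
  rw [map_sub, sub_eq_zero]
  exact h m (by exact_mod_cast hm)

theorem Agr.listprod (W W' : ℕ → MvPowerSeries σ ℚ) (l : List ℕ)
    (h : ∀ k ∈ l, Agr n (W k) (W' k)) : Agr n (l.map W).prod (l.map W').prod := by
  induction l with
  | nil => simpa using Agr.rfl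
  | cons a l ih =>
    rw [List.map_cons, List.prod_cons, List.map_cons, List.prod_cons]
    exact (h a (by simp)).mul (ih fun k hk => h k (by simp [hk]))

end agr

section key
variable {d : ℕ} {Δ : Finset ℕ} {W W' : ℤ → MvPowerSeries ↥Δ ℚ} {j : ℤ}

theorem dSysX_agr (n : ℕ) (h0 : Agr n (W 0) (W' 0)) (h1 : Agr n (W (-1)) (W' (-1))) :
    Agr (n + 1) (dSysX Δ W j) (dSysX Δ W' j) := by
  unfold dSysX
  refine Agr.sum _ fun i _ => Agr.mul_X (Agr.sum _ fun bc _ => ?_) i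
  exact (Agr.rfl.mul ((Agr.rfl.add h0).pow _)).mul (h1.pow _)

theorem dSysX_const : MvPowerSeries.constantCoeff (dSysX Δ W j) = 0 := by
  simp [dSysX]

theorem blocks_facts (N : ℕ) (hN : 1 ≤ N) (c : Composition N) :
    c.blocks = [N] ∨ ∃ a b t, c.blocks = a :: b :: t := by
  have hs := c.blocks_sum
  match hb : c.blocks with
  | [] => rw [hb] at hs; simp at hs; omega
  | [a] => rw [hb] at hs; left; simp at hs; rw [hs]
  | a :: b :: t => right; exact ⟨a, b, t, rfl⟩

theorem dSysC_const (hj : -1 ≤ j)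
    (hW : ∀ k : ℤ, 1 ≤ k → k ≤ j + 2 → MvPowerSeries.constantCoeff (W k) = 0) :
    MvPowerSeries.constantCoeff (dSysC Δ W j) = 0 := by
  unfold dSysC
  rw [map_sum]
  refine Finset.sum_eq_zero fun c _ => ?_
  have hle : ∀ a ∈ c.blocks, 1 ≤ a ∧ a ≤ (j + 2).toNat := fun a ha =>
    ⟨c.one_le_blocks ha, c.blocks_le ha⟩
  rcases blocks_facts _ (by omega) c with h | ⟨a, b, t, h⟩
  · rw [h]
    simp only [List.map_cons, List.map_nil, List.prod_singleton]
    exact hW _ (by omega) (by omega)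
  · have := hle a (by simp [h])
    rw [h, List.map_cons, List.prod_cons, map_mul, hW _ (by omega) (by omega), zero_mul]

theorem dSysC_coeff (hj : -1 ≤ j) (m : ↥Δ →₀ ℕ)
    (hW : ∀ k : ℤ, 1 ≤ k → k ≤ j + 2 → MvPowerSeries.constantCoeff (W k) = 0)
    (hW' : ∀ k : ℤ, 1 ≤ k → k ≤ j + 2 → MvPowerSeries.constantCoeff (W' k) = 0)
    (hA : ∀ k : ℤ, 1 ≤ k → k ≤ j + 2 → Agr m.degree (W k) (W' k))
    (hm : MvPowerSeries.coeff m (W (j + 2)) = MvPowerSeries.coeff m (W' (j + 2))) :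
    MvPowerSeries.coeff m (dSysC Δ W j) = MvPowerSeries.coeff m (dSysC Δ W' j) := by
  unfold dSysC
  rw [map_sum, map_sum]
  refine Finset.sum_congr rfl fun c _ => ?_
  have hle : ∀ a ∈ c.blocks, 1 ≤ a ∧ a ≤ (j + 2).toNat := fun a ha =>
    ⟨c.one_le_blocks ha, c.blocks_le ha⟩
  rcases blocks_facts _ (by omega) c with h | ⟨a, b, t, h⟩
  · rw [h]
    simp only [List.map_cons, List.map_nil, List.prod_singleton]
    rw [show (((j + 2).toNat : ℕ) : ℤ) = j + 2 by omega]
    exact hm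
  · rw [h] at hle ⊢
    have ha := hle a (by simp)
    have hb := hle b (by simp)
    rw [List.map_cons, List.prod_cons, List.map_cons (l := b :: t), List.prod_cons]
    refine Agr.coeff (n := m.degree + 1) (Agr.mul_succ (hA _ (by omega) (by omega)) ?_ ?_ ?_) m
      (by omega)
    · refine Agr.listprod (fun k : ℕ => W k) (fun k : ℕ => W' k) (b :: t) fun k hk => ?_
      have := hle k (List.mem_cons_of_mem _ hk)
      exact hA _ (by omega) (by omega)
    · rw [one_le_order_iff, List.map_cons, List.prod_cons, map_mul,
        hW _ (by omega) (by omega), zero_mul]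
    · rw [one_le_order_iff]
      exact hW' _ (by omega) (by omega)

theorem dSysR_const (hj : -1 ≤ j)
    (hW : ∀ k : ℤ, -1 ≤ k → k ≤ d → MvPowerSeries.constantCoeff (W k) = 0) :
    MvPowerSeries.constantCoeff (dSysR d Δ W j) = 0 := by
  unfold dSysR
  split_ifs with h
  · exact dSysC_const hj fun k hk hk' => hW k (by omega) (by omega)
  · exact dSysX_const

theorem dSysR_coeff (hj : -1 ≤ j) (hjd : j ≤ d) (m : ↥Δ →₀ ℕ)
    (hW : ∀ k : ℤ, -1 ≤ k → k ≤ d → MvPowerSeries.constantCoeff (W k) = 0)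
    (hW' : ∀ k : ℤ, -1 ≤ k → k ≤ d → MvPowerSeries.constantCoeff (W' k) = 0)
    (H : ∀ (k : ℤ) (m' : ↥Δ →₀ ℕ), -1 ≤ k → k ≤ d →
      ((d + 3) * m'.degree + (d - k).toNat) < ((d + 3) * m.degree + (d - j).toNat) →
      MvPowerSeries.coeff m' (W k) = MvPowerSeries.coeff m' (W' k)) (hd : 1 ≤ d) :
    MvPowerSeries.coeff m (dSysR d Δ W j) = MvPowerSeries.coeff m (dSysR d Δ W' j) := by
  have hA : ∀ k : ℤ, -1 ≤ k → k ≤ d → Agr m.degree (W k) (W' k) := by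
    intro k hk hk'
    refine agr_of_coeff fun m' hm' => H k m' hk hk' ?_
    have h1 : (d + 3) * (m'.degree + 1) ≤ (d + 3) * m.degree := Nat.mul_le_mul_left _ hm'
    rw [mul_add] at h1
    omega
  unfold dSysR
  split_ifs with h
  · refine dSysC_coeff hj m (fun k hk hk' => hW k (by omega) (by omega))
      (fun k hk hk' => hW' k (by omega) (by omega))
      (fun k hk hk' => hA k (by omega) (by omega)) (H _ _ (by omega) (by omega) (by omega))
  · exact (dSysX_agr m.degree (hA 0 (by omega) (by omega)) (hA (-1) (by omega) (by omega))).coeff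
      m (by omega)

theorem sol_iff (hd : 1 ≤ d) : IsDSystemSolution d Δ W ↔
    W (-2) = 1 ∧ (∀ j : ℤ, -1 ≤ j → j ≤ d → MvPowerSeries.constantCoeff (W j) = 0) ∧
    ∀ j : ℤ, -1 ≤ j → j ≤ d → W j = dSysR d Δ W j := by
  constructor
  · rintro ⟨h1, h2, h3, h4⟩
    refine ⟨h1, h2, fun j hj hjd => ?_⟩
    unfold dSysR
    split_ifs with h
    · rw [h3 j (by omega) h, dSysC]
      exact Finset.sum_congr rfl fun c _ => dSys_bridge W c.blocks
    · exact h4 j (by omega) hjd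
  · rintro ⟨h1, h2, h3⟩
    refine ⟨h1, h2, fun j hj hjd => ?_, fun j hj hjd => ?_⟩
    · rcases eq_or_lt_of_le hj with h | h
      · subst h
        rw [h1]
        symm
        change ∑ c : Composition 0, _ = _
        have hb : ∀ c : Composition 0, c.blocks = [] := fun c => by
          rw [Composition.blocks_eq_nil]
        rw [Finset.sum_congr rfl (g := fun _ => (1 : MvPowerSeries ↥Δ ℚ))
          fun c _ => by rw [hb c]; simp]
        simp [composition_card]
      · have := h3 j (by omega) (by omega)
        rw [dSysR, if_pos hjd, dSysC] at this
        rw [this]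
        exact Finset.sum_congr rfl fun c _ => (dSys_bridge W c.blocks).symm
    · have := h3 j (by omega) (by omega)
      rwa [dSysR, if_neg (by omega)] at this

end key

theorem fix_exists {α β : Type*} [Inhabited β] (ρ : α → ℕ) (F : (α → β) → α → β)
    (hF : ∀ f g a, (∀ b, ρ b < ρ a → f b = g b) → F f a = F g a) : ∃ f, F f = f := by
  let h : ℕ → α → β := fun n => F^[n] (fun _ => default)
  have hs : ∀ n, h (n + 1) = F (h n) := fun n => Function.iterate_succ_apply' F n _
  have key : ∀ r n m a, ρ a < r → r ≤ n → r ≤ m → h n a = h m a := by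
    intro r
    induction r with
    | zero => intro n m a ha; omega
    | succ r ih =>
      intro n m a ha hn hm
      obtain ⟨n, rfl⟩ : ∃ k, n = k + 1 := ⟨n - 1, by omega⟩
      obtain ⟨m, rfl⟩ : ∃ k, m = k + 1 := ⟨m - 1, by omega⟩
      rw [hs, hs]
      exact hF _ _ _ fun b hb => ih n m b (by omega) (by omega) (by omega)
  refine ⟨fun a => h (ρ a + 1) a, ?_⟩
  funext a
  rw [hs]
  exact hF _ _ _ fun b hb => key (ρ b + 1) _ _ b (by omega) (by omega) (by omega)

noncomputable def dDec0 (Δ : Finset ℕ) (f : ℤ × (↥Δ →₀ ℕ) → ℚ) (j : ℤ) : MvPowerSeries ↥Δ ℚ :=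
  open Classical in
  fun m => if m = 0 then 0 else f (j, m)

/-- power series family with prescribed non-constant coefficients -/
noncomputable def dDec (Δ : Finset ℕ) (f : ℤ × (↥Δ →₀ ℕ) → ℚ) (j : ℤ) : MvPowerSeries ↥Δ ℚ :=
  if j = -2 then 1 else dDec0 Δ f j

theorem dDec_coeff (Δ : Finset ℕ) (f : ℤ × (↥Δ →₀ ℕ) → ℚ) (j : ℤ) (hj : -1 ≤ j)
    (m : ↥Δ →₀ ℕ) (hm : m ≠ 0) : MvPowerSeries.coeff m (dDec Δ f j) = f (j, m) := by
  rw [dDec, if_neg (by omega)]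
  exact if_neg hm

theorem dDec_const (Δ : Finset ℕ) (f : ℤ × (↥Δ →₀ ℕ) → ℚ) (j : ℤ) (hj : -1 ≤ j) :
    MvPowerSeries.constantCoeff (dDec Δ f j) = 0 := by
  rw [dDec, if_neg (by omega)]
  rw [← MvPowerSeries.coeff_zero_eq_constantCoeff_apply]
  change dDec0 Δ f j 0 = 0
  simp [dDec0]

/-- For every integer `d ≥ 1` and finite set `Δ` of integers each `≥ d`, the `d`-system for
`Δ` has exactly one solution `(W_{−2}, W_{−1}, …, W_d)`. -/
theorem dSystem_exists_unique (d : ℕ) (hd : 1 ≤ d) (Δ : Finset ℕ) (hΔ : ∀ i ∈ Δ, d ≤ i) :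
    ∃ W : ℤ → MvPowerSeries ↥Δ ℚ, IsDSystemSolution d Δ W ∧
      ∀ W' : ℤ → MvPowerSeries ↥Δ ℚ, IsDSystemSolution d Δ W' →
        ∀ j : ℤ, -2 ≤ j → j ≤ (d : ℤ) → W' j = W j := by
  obtain ⟨f, hf⟩ := fix_exists (α := ℤ × (↥Δ →₀ ℕ)) (β := ℚ)
    (fun a => (d + 3) * a.2.degree + (d - a.1).toNat)
    (fun f a => if -1 ≤ a.1 ∧ a.1 ≤ d then MvPowerSeries.coeff a.2 (dSysR d Δ (dDec Δ f) a.1)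
      else 0) (by
      rintro f g ⟨j, m⟩ h
      dsimp only at h ⊢
      split_ifs with hj
      · refine dSysR_coeff hj.1 hj.2 m (fun k hk _ => dDec_const Δ f k hk)
          (fun k hk _ => dDec_const Δ g k hk) ?_ hd
        intro k m' hk hk' hlt
        by_cases hm' : m' = 0
        · subst hm'
          exact (dDec_const Δ f k hk).trans (dDec_const Δ g k hk).symm
        · rw [dDec_coeff _ _ _ hk _ hm', dDec_coeff _ _ _ hk _ hm']
          exact h (k, m') hlt
      · rfl)
  have hsol : IsDSystemSolution d Δ (dDec Δ f) := by
    rw [sol_iff hd]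
    refine ⟨by simp [dDec], fun j hj _ => dDec_const Δ f j hj, fun j hj hjd => ?_⟩
    ext m
    by_cases hm : m = 0
    · subst hm
      exact (dDec_const Δ f j hj).trans
        (dSysR_const hj fun k hk _ => dDec_const Δ f k hk).symm
    · rw [dDec_coeff _ _ _ hj _ hm]
      have := congrFun hf (j, m)
      dsimp only at this
      rw [if_pos ⟨hj, hjd⟩] at this
      exact this.symm
  refine ⟨dDec Δ f, hsol, fun W' hW' => ?_⟩
  rw [sol_iff hd] at hsol hW'
  obtain ⟨a1, a2, a3⟩ := hsol
  obtain ⟨b1, b2, b3⟩ := hW'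
  have key : ∀ (r : ℕ) (j : ℤ) (m : ↥Δ →₀ ℕ), -1 ≤ j → j ≤ d →
      (d + 3) * m.degree + (d - j).toNat < r →
      MvPowerSeries.coeff m (W' j) = MvPowerSeries.coeff m (dDec Δ f j) := by
    intro r
    induction r with
    | zero => intro j m _ _ h; omega
    | succ r ih =>
      intro j m hj hjd h
      rw [b3 j hj hjd, a3 j hj hjd]
      exact dSysR_coeff hj hjd m b2 a2
        (fun k m' hk hk' hlt => ih k m' hk hk' (by omega)) hd
  intro j hj hjd
  rcases eq_or_lt_of_le hj with h | h
  · rw [← h, a1, b1]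
  · ext m
    exact key _ j m (by omega) hjd (Nat.lt_succ_self _)
end

section
/- For every integer b ≥ 1 and every finite set Δ of integers each ≥ b, the b-bipartite system for Δ has exactly one solution (V_{−1}, V_0, …, V_b). -/
open MvPowerSeries in
/-- `V : ℤ → ℚ[[y_s : s ∈ σ]]` (only the values `V_{−1}, …, V_b` are relevant; the variable
`y_s` plays the role of `x_{2·deg s}`) is a solution of the `b`-bipartite system if:
`V_{−1} = 1`; the constant term of `V_j` vanishes for `0 ≤ j ≤ b`; for `−1 ≤ j ≤ b−2`,
`V_j` is the sum over all compositions `(c_1,…,c_r)` of `j+1` into positive parts of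
`V_{c_1}·…·V_{c_r}`; and for `j ∈ {b−1, b}`,
`V_j = Σ_s y_s · C(2·deg s − 1, deg s − j − 1) · (1+V_0)^{deg s + j}`, the binomial
coefficient being interpreted as `0` when `deg s − j − 1 < 0`. -/
def IsBipSystemSolution (b : ℕ) {σ : Type*} [Fintype σ] (deg : σ → ℕ)
    (V : ℤ → MvPowerSeries σ ℚ) : Prop :=
  V (-1) = 1 ∧
  (∀ j : ℤ, 0 ≤ j → j ≤ (b : ℤ) → constantCoeff (σ := σ) (R := ℚ) (V j) = 0) ∧
  (∀ j : ℤ, -1 ≤ j → j ≤ (b : ℤ) - 2 →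
    V j = ∑ c : Composition (j + 1).toNat, ((c.blocks.map (fun k => V (k : ℤ))).prod)) ∧
  (∀ j : ℤ, (b : ℤ) - 1 ≤ j → j ≤ (b : ℤ) →
    V j = ∑ s : σ,
      MvPowerSeries.X s *
        (C (σ := σ) (R := ℚ) (if j + 1 ≤ (deg s : ℤ) then
            (((2 * deg s - 1).choose (deg s - j.toNat - 1) : ℕ) : ℚ) else 0)) *
        (1 + V 0) ^ (deg s + j.toNat))

namespace BipAux
open MvPowerSeries

/-- agreement of coefficients in degrees below `n` -/
def E {σ : Type*} (n : ℕ) (f g : MvPowerSeries σ ℚ) : Prop :=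
  ∀ d : σ →₀ ℕ, d.degree < n → coeff d f = coeff d g

theorem E.mul {σ : Type*} {n : ℕ} {f g f' g' : MvPowerSeries σ ℚ}
    (h : E n f g) (h' : E n f' g') : E n (f * f') (g * g') := by
  classical
  intro d hd
  rw [coeff_mul, coeff_mul]
  refine Finset.sum_congr rfl fun p hp => ?_
  rw [Finset.HasAntidiagonal.mem_antidiagonal] at hp
  have := congrArg Finsupp.degree hp
  rw [map_add] at this
  rw [h p.1 (by omega), h' p.2 (by omega)]

theorem E.rfl' {σ : Type*} {n : ℕ} {f : MvPowerSeries σ ℚ} : E n f f := fun _ _ => rfl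

theorem E.add {σ : Type*} {n : ℕ} {f g f' g' : MvPowerSeries σ ℚ}
    (h : E n f g) (h' : E n f' g') : E n (f + f') (g + g') := by
  intro d hd
  rw [map_add, map_add, h d hd, h' d hd]

theorem E.pow {σ : Type*} {n : ℕ} {f g : MvPowerSeries σ ℚ}
    (h : E n f g) (k : ℕ) : E n (f ^ k) (g ^ k) := by
  induction k with
  | zero => simpa using E.rfl'
  | succ k ih => rw [pow_succ, pow_succ]; exact ih.mul h

theorem E.sum {σ ι : Type*} {n : ℕ} (s : Finset ι) {f g : ι → MvPowerSeries σ ℚ}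
    (h : ∀ i ∈ s, E n (f i) (g i)) : E n (∑ i ∈ s, f i) (∑ i ∈ s, g i) := by
  intro d hd
  rw [map_sum, map_sum]
  exact Finset.sum_congr rfl fun i hi => h i hi d hd

theorem E.list {σ : Type*} {n : ℕ} (l : List ℕ) {V W : ℤ → MvPowerSeries σ ℚ}
    (h : ∀ k ∈ l, E n (V k) (W k)) :
    E n (l.map (fun k : ℕ => V (k : ℤ))).prod (l.map (fun k : ℕ => W (k : ℤ))).prod := by
  induction l with
  | nil => simpa using E.rfl'
  | cons a t ih =>
    simp only [List.map_cons, List.prod_cons]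
    exact (h a (by simp)).mul (ih fun k hk => h k (by simp [hk]))

theorem E.mul_left {σ : Type*} {n : ℕ} {x f g : MvPowerSeries σ ℚ}
    (hx : constantCoeff x = 0) (h : E n f g) : E (n + 1) (x * f) (x * g) := by
  classical
  intro d hd
  rw [coeff_mul, coeff_mul]
  refine Finset.sum_congr rfl fun p hp => ?_
  rw [Finset.HasAntidiagonal.mem_antidiagonal] at hp
  have := congrArg Finsupp.degree hp
  rw [map_add] at this
  by_cases h0 : p.1 = 0
  · rw [h0, coeff_zero_eq_constantCoeff_apply, hx]; simp
  · have : p.1.degree ≠ 0 := fun h => h0 ((Finsupp.degree_eq_zero_iff _).1 h)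
    rw [h p.2 (by omega)]

theorem E.mul' {σ : Type*} {n : ℕ} {f g f' g' : MvPowerSeries σ ℚ}
    (hf : constantCoeff f = 0) (hg' : constantCoeff g' = 0)
    (h : E n f g) (h' : E n f' g') : E (n + 1) (f * f') (g * g') := by
  intro d hd
  rw [E.mul_left hf h' d hd, mul_comm f, mul_comm g, E.mul_left hg' h d hd]

theorem list_const {σ : Type*} (l : List ℕ) (hl : l ≠ []) (V : ℤ → MvPowerSeries σ ℚ)
    (h : ∀ k ∈ l, constantCoeff (V k) = 0) :
    constantCoeff (l.map (fun k : ℕ => V (k : ℤ))).prod = 0 := by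
  cases l with
  | nil => exact absurd rfl hl
  | cons a t => simp [h a (by simp)]

/-- the operator -/
noncomputable def Phi (b : ℕ) {σ : Type*} [Fintype σ] (deg : σ → ℕ)
    (V : ℤ → MvPowerSeries σ ℚ) (j : ℤ) : MvPowerSeries σ ℚ :=
  if j ≤ (b : ℤ) - 2 then
    ∑ c : Composition (j + 1).toNat, ((c.blocks.map (fun k : ℕ => V (k : ℤ))).prod)
  else ∑ s : σ,
      MvPowerSeries.X s *
        (C (σ := σ) (R := ℚ) (if j + 1 ≤ (deg s : ℤ) then
            (((2 * deg s - 1).choose (deg s - j.toNat - 1) : ℕ) : ℚ) else 0)) *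
        (1 + V 0) ^ (deg s + j.toNat)

def S (b : ℕ) {σ : Type*} (V : ℤ → MvPowerSeries σ ℚ) : Prop :=
  ∀ j : ℤ, 0 ≤ j → j ≤ (b : ℤ) → constantCoeff (V j) = 0

def A (b : ℕ) {σ : Type*} (m : ℕ) (V W : ℤ → MvPowerSeries σ ℚ) : Prop :=
  ∀ j : ℤ, 0 ≤ j → j ≤ (b : ℤ) → ∀ d : σ →₀ ℕ,
    (b + 1) * d.degree + ((b : ℤ) - j).toNat < m → coeff d (V j) = coeff d (W j)

theorem S_Phi (b : ℕ) {σ : Type*} [Fintype σ] (deg : σ → ℕ)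
    (V : ℤ → MvPowerSeries σ ℚ) (hV : S b V) : S b (Phi b deg V) := by
  intro j h0 hj
  unfold Phi
  split_ifs with h
  · rw [map_sum]
    refine Finset.sum_eq_zero fun c _ => ?_
    apply list_const
    · intro h
      have := c.blocks_sum
      rw [h] at this
      simp at this
      omega
    · intro k hk
      have := List.le_sum_of_mem hk
      rw [c.blocks_sum] at this
      exact hV k (by omega) (by omega)
  · rw [map_sum]
    refine Finset.sum_eq_zero fun c _ => ?_
    simp

theorem A_Phi (b : ℕ) {σ : Type*} [Fintype σ] (deg : σ → ℕ) (m : ℕ)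
    (V W : ℤ → MvPowerSeries σ ℚ) (hV : S b V) (hW : S b W) (h : A b m V W) :
    A b (m + 1) (Phi b deg V) (Phi b deg W) := by
  intro j h0 hj d hd
  have key : ∀ k : ℤ, 0 ≤ k → k ≤ b → E d.degree (V k) (W k) := by
    intro k hk0 hkb e he
    apply h k hk0 hkb
    have : (b + 1) * (e.degree + 1) ≤ (b + 1) * d.degree := Nat.mul_le_mul_left _ he
    rw [Nat.mul_add] at this
    omega
  unfold Phi
  split_ifs with hjb
  · rw [map_sum, map_sum]
    refine Finset.sum_congr rfl fun c _ => ?_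
    have hs := c.blocks_sum
    have hk : ∀ k ∈ c.blocks, (k : ℤ) ≤ b := by
      intro k hk
      have := List.le_sum_of_mem hk
      omega
    generalize c.blocks = l at *
    match l, hs, hk with
    | [], hs, hk => simp at hs; omega
    | [a], hs, hk =>
      simp at hs
      simp only [List.map_cons, List.map_nil, List.prod_cons, List.prod_nil, mul_one]
      refine h a (by omega) (by omega) d (by omega)
    | a :: a' :: t, hs, hk =>
      rw [List.map_cons, List.prod_cons, List.map_cons (f := fun k : ℕ => W k), List.prod_cons]
      refine E.mul' (n := d.degree) (hV a (by omega) (hk a (by simp))) ?_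
        (key a (by omega) (hk a (by simp))) ?_ d (by omega)
      · exact list_const _ (by simp) _ fun k hk' =>
          hW k (by omega) (hk k (List.mem_cons_of_mem _ hk'))
      · exact E.list _ fun k hk' =>
          key k (by omega) (hk k (List.mem_cons_of_mem _ hk'))
  · refine E.sum (n := d.degree + 1) _ (fun s _ => ?_) d (by omega)
    rw [mul_assoc, mul_assoc]
    exact E.mul_left (by simp) (E.mul E.rfl' ((E.add E.rfl' (key 0 (by omega) (by omega))).pow _))

theorem A.ext {b : ℕ} {σ : Type*} {V W : ℤ → MvPowerSeries σ ℚ} (h : ∀ m, A b m V W)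
    (j : ℤ) (h0 : 0 ≤ j) (hj : j ≤ b) : V j = W j := by
  ext d
  exact h _ j h0 hj d (Nat.lt_succ_self _)

theorem A.congr {b : ℕ} {σ : Type*} {m : ℕ} {V W V' W' : ℤ → MvPowerSeries σ ℚ}
    (h : A b m V W) (hV : ∀ j : ℤ, 0 ≤ j → j ≤ b → V j = V' j)
    (hW : ∀ j : ℤ, 0 ≤ j → j ≤ b → W j = W' j) : A b m V' W' := by
  intro j h0 hj d hd
  rw [← hV j h0 hj, ← hW j h0 hj]
  exact h j h0 hj d hd

theorem wconv {σ : Type*} (l : List ℕ) (V : ℤ → MvPowerSeries σ ℚ) :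
    (l.map (fun k => V (k : ℤ))).prod = (l.map (fun k : ℕ => V (k : ℤ))).prod := by
  congr 1
  induction l with
  | nil => rfl
  | cons a t ih =>
    rw [List.map_cons, ← ih]
    rfl

theorem sol_iff (b : ℕ) {σ : Type*} [Fintype σ] (deg : σ → ℕ) (hb : 1 ≤ b)
    (V : ℤ → MvPowerSeries σ ℚ) : IsBipSystemSolution b deg V ↔
      V (-1) = 1 ∧ S b V ∧ ∀ j : ℤ, 0 ≤ j → j ≤ b → V j = Phi b deg V j := by
  unfold IsBipSystemSolution
  simp only [wconv]
  constructor
  · rintro ⟨h1, h2, h3, h4⟩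
    refine ⟨h1, h2, fun j h0 hj => ?_⟩
    unfold Phi
    split_ifs with h
    · exact h3 j (by omega) h
    · exact h4 j (by omega) hj
  · rintro ⟨h1, h2, h3⟩
    refine ⟨h1, h2, fun j h0 hj => ?_, fun j h0 hj => ?_⟩
    · rcases eq_or_lt_of_le h0 with rfl | h0
      · rw [h1]
        have : ∀ n : ℕ, n = 0 →
          (1 : MvPowerSeries σ ℚ) = ∑ c : Composition n, (c.blocks.map (fun k : ℕ => V (k : ℤ))).prod := by
          rintro n rfl
          have hc : ∀ c : Composition 0, c.blocks = [] := by
            intro c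
            rw [List.eq_nil_iff_forall_not_mem]
            intro k hk
            have h1 := c.blocks_pos hk
            have h2 := List.le_sum_of_mem hk
            rw [c.blocks_sum] at h2
            omega
          simp [hc, composition_card]
        exact this _ (by simp)
      · rw [h3 j (by omega) (by omega), Phi, if_pos hj]
    · rw [h3 j (by omega) (by omega), Phi, if_neg (by omega)]

theorem main (b : ℕ) {σ : Type*} [Fintype σ] (deg : σ → ℕ) (hb : 1 ≤ b) :
    ∃ V : ℤ → MvPowerSeries σ ℚ, IsBipSystemSolution b deg V ∧
      ∀ V' : ℤ → MvPowerSeries σ ℚ, IsBipSystemSolution b deg V' →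
        ∀ j : ℤ, -1 ≤ j → j ≤ (b : ℤ) → V' j = V j := by
  let U : ℕ → ℤ → MvPowerSeries σ ℚ := fun n => (Phi b deg)^[n] 0
  have hU : ∀ n, U (n + 1) = Phi b deg (U n) := fun n => Function.iterate_succ_apply' _ _ _
  have hS : ∀ n, S b (U n) := by
    intro n
    induction n with
    | zero => intro j _ _; simp [U]
    | succ n ih => rw [hU]; exact S_Phi _ _ _ ih
  have hA1 : ∀ n, A b n (U n) (U (n + 1)) := by
    intro n
    induction n with
    | zero => intro j _ _ d hd; omega
    | succ n ih => rw [hU, hU (n + 1)]; exact A_Phi _ _ _ _ _ (hS _) (hS _) ih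
  have hA : ∀ n k, A b n (U n) (U (n + k)) := by
    intro n k
    induction k with
    | zero => intro j _ _ d hd; rfl
    | succ k ih =>
      intro j h0 hj d hd
      rw [ih j h0 hj d hd]
      exact hA1 (n + k) j h0 hj d (by omega)
  let V : ℤ → MvPowerSeries σ ℚ := fun j => if j = -1 then 1 else
    fun d => coeff d (U ((b + 1) * d.degree + ((b : ℤ) - j).toNat + 1) j)
  have hVc : ∀ j : ℤ, 0 ≤ j → ∀ d, coeff d (V j) =
      coeff d (U ((b + 1) * d.degree + ((b : ℤ) - j).toNat + 1) j) := by
    intro j hj d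
    have : V j = fun d => coeff d (U ((b + 1) * d.degree + ((b : ℤ) - j).toNat + 1) j) :=
      if_neg (by omega)
    rw [this]
    rfl
  have hVS : S b V := by
    intro j h0 hj
    rw [← coeff_zero_eq_constantCoeff_apply, hVc j h0, coeff_zero_eq_constantCoeff_apply]
    exact hS _ j h0 hj
  have hVA : ∀ n, A b n V (U n) := by
    intro n j h0 hj d hd
    rw [hVc j h0]
    obtain ⟨k, rfl⟩ := Nat.exists_eq_add_of_le (Nat.succ_le_of_lt hd)
    exact hA _ k j h0 hj d (Nat.lt_succ_self _)
  have hfix : ∀ j : ℤ, 0 ≤ j → j ≤ b → V j = Phi b deg V j := by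
    refine A.ext fun m j h0 hj d hd => ?_
    rw [A_Phi b deg m V (U m) hVS (hS m) (hVA m) j h0 hj d (by omega), ← hU]
    exact hVA (m + 1) j h0 hj d (by omega)
  refine ⟨V, (sol_iff b deg hb V).2 ⟨by simp [V], hVS, hfix⟩, ?_⟩
  intro V' hV' j h1 hj
  obtain ⟨g1, g2, g3⟩ := (sol_iff b deg hb V').1 hV'
  rcases eq_or_lt_of_le h1 with rfl | h1
  · rw [g1]; simp [V]
  · refine A.ext (b := b) (fun m => ?_) j (by omega) hj
    induction m with
    | zero => intro j _ _ d hd; omega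
    | succ n ih =>
      exact (A_Phi b deg n _ _ g2 hVS ih).congr (fun j h0 hj => (g3 j h0 hj).symm)
        (fun j h0 hj => (hfix j h0 hj).symm)

end BipAux

/-- For every integer `b ≥ 1` and finite set `Δ` of integers each `≥ b`, the `b`-bipartite
system for `Δ` has exactly one solution `(V_{−1}, V_0, …, V_b)`. -/
theorem bipSystem_exists_unique (b : ℕ) (hb : 1 ≤ b) (Δ : Finset ℕ) (hΔ : ∀ i ∈ Δ, b ≤ i) :
    ∃ V : ℤ → MvPowerSeries ↥Δ ℚ, IsBipSystemSolution b (fun i : ↥Δ => (i : ℕ)) V ∧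
      ∀ V' : ℤ → MvPowerSeries ↥Δ ℚ, IsBipSystemSolution b (fun i : ↥Δ => (i : ℕ)) V' →
        ∀ j : ℤ, -1 ≤ j → j ≤ (b : ℤ) → V' j = V j := by
  exact BipAux.main b _ hb
end

section
/- Let b ≥ 1 be an integer, let d = 2b, and let Δ be a finite set of even integers each ≥ d. Let (W_{−2}, W_{−1}, …, W_d) be the unique solution of the d-system for Δ. Then W_j = 0 for every odd j with −1 ≤ j ≤ d. Moreover, setting V_i := W_{2i} for −1 ≤ i ≤ b and identifying each variable x_{2i} (2i ∈ Δ) with the variable y_i, the family (V_{−1}, V_0, …, V_b) is the unique solution of the b-bipartite system for Δ' = {i : 2i ∈ Δ}. -/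
theorem aux_coe {R : Type*} (f : ℤ → R) (l : List ℕ) :
    List.map (fun k : ℤ => f k) (l >>= fun a => pure (a : ℤ)) = l.map (fun k : ℕ => f (k : ℤ)) := by
  induction l with
  | nil => rfl
  | cons a l ih => simp_all

theorem aux_nak {σ : Type*} (S : Set (MvPowerSeries σ ℚ)) (hS : S.Finite)
    (h : ∀ x ∈ S, x ∈ RingHom.ker (MvPowerSeries.constantCoeff (σ := σ) (R := ℚ)) * Ideal.span S) :
    ∀ x ∈ S, x = 0 := by
  have hb : Ideal.span S = ⊥ := by
    apply Submodule.eq_bot_of_le_smul_of_le_jacobson_bot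
      (RingHom.ker (MvPowerSeries.constantCoeff (σ := σ) (R := ℚ))) (Ideal.span S)
    · exact Submodule.fg_span hS
    · rw [smul_eq_mul]
      exact Ideal.span_le.2 h
    · intro x hx
      rw [Ideal.mem_jacobson_bot]
      intro y
      rw [MvPowerSeries.isUnit_iff_constantCoeff]
      rw [RingHom.mem_ker] at hx
      simp [hx]
  intro x hx
  have := Ideal.subset_span hx
  rw [hb] at this
  simpa using this

theorem aux_list1 {R : Type*} [CommRing R] (J : Ideal R) (f g : ℕ → R) (l : List ℕ)
    (hd : ∀ k ∈ l, f k - g k ∈ J) : (l.map f).prod - (l.map g).prod ∈ J := by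
  induction l with
  | nil => simp
  | cons a l ih =>
    simp only [List.map_cons, List.prod_cons]
    have e : f a * (l.map f).prod - g a * (l.map g).prod
      = (l.map f).prod * (f a - g a) + g a * ((l.map f).prod - (l.map g).prod) := by ring
    rw [e]
    exact J.add_mem (J.mul_mem_left _ (hd a (by simp)))
      (J.mul_mem_left _ (ih fun k hk => hd k (by simp [hk])))

theorem aux_list2 {R : Type*} [CommRing R] (m J : Ideal R) (f g : ℕ → R) (l : List ℕ)
    (hl : 2 ≤ l.length) (hf : ∀ k ∈ l, f k ∈ m) (hg : ∀ k ∈ l, g k ∈ m)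
    (hd : ∀ k ∈ l, f k - g k ∈ J) : (l.map f).prod - (l.map g).prod ∈ m * J := by
  match l, hl with
  | a :: a' :: l, _ =>
    rw [List.map_cons, List.prod_cons, List.map_cons (f := g), List.prod_cons]
    have e : ∀ F G : R, f a * F - g a * G = F * (f a - g a) + g a * (F - G) := by
      intros; ring
    rw [e]
    refine Ideal.add_mem _ (Ideal.mul_mem_mul ?_ (hd a (by simp))) (Ideal.mul_mem_mul (hg a (by simp)) ?_)
    · rw [List.map_cons, List.prod_cons]
      exact m.mul_mem_right _ (hf a' (by simp))
    · exact aux_list1 J f g _ fun k hk => hd k (by simp at hk ⊢; tauto)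

theorem aux_comp {R : Type*} [CommRing R] (m J : Ideal R) (f g : ℕ → R) (n : ℕ) (hn : 0 < n)
    (hf : ∀ k, 1 ≤ k → k ≤ n → f k ∈ m) (hg : ∀ k, 1 ≤ k → k ≤ n → g k ∈ m)
    (hd : ∀ k, 1 ≤ k → k ≤ n → f k - g k ∈ J) :
    (∑ c : Composition n, (c.blocks.map f).prod) - (∑ c : Composition n, (c.blocks.map g).prod)
      - (f n - g n) ∈ m * J := by
  classical
  rw [← Finset.sum_sub_distrib,
    ← Finset.add_sum_erase _ _ (Finset.mem_univ (Composition.single n hn))]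
  have e : ((Composition.single n hn).blocks.map f).prod
    - ((Composition.single n hn).blocks.map g).prod = f n - g n := by
    simp [Composition.single]
  rw [e, add_sub_cancel_left]
  refine Ideal.sum_mem _ fun c hc => ?_
  have hc' : c ≠ Composition.single n hn := (Finset.mem_erase.1 hc).1
  have hle : ∀ k ∈ c.blocks, k ≤ n := fun k hk => by
    have := List.le_sum_of_mem hk
    rwa [c.blocks_sum] at this
  have h1 : ∀ k ∈ c.blocks, 1 ≤ k := fun k hk => c.blocks_pos hk
  apply aux_list2
  · have h := mt (Composition.eq_single_iff_length hn).2 hc'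
    have h2 := c.length_pos_of_pos hn
    change 2 ≤ c.length
    omega
  · exact fun k hk => hf k (h1 k hk) (hle k hk)
  · exact fun k hk => hg k (h1 k hk) (hle k hk)
  · exact fun k hk => hd k (h1 k hk) (hle k hk)

theorem aux_all_even (l : List ℕ) (h : ∀ k ∈ l, Even k) : Even l.sum := by
  induction l with
  | nil => simp
  | cons a l ih =>
    rw [List.sum_cons]
    exact (h a (by simp)).add (ih fun k hk => h k (by simp [hk]))

theorem aux_double {R : Type*} [CommRing R] (f : ℕ → R) (n N : ℕ) (hN : N = 2 * n)
    (hodd : ∀ k, k ≤ N → Odd k → f k = 0) :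
    (∑ c : Composition N, (c.blocks.map f).prod)
      = ∑ c : Composition n, (c.blocks.map (fun k => f (2 * k))).prod := by
  classical
  subst hN
  symm
  refine Finset.sum_of_injOn (fun c : Composition n =>
    (⟨c.blocks.map (fun k => 2 * k), ?_, ?_⟩ : Composition (2 * n))) ?_ ?_ ?_ ?_
  · intro i hi
    obtain ⟨k, hk, rfl⟩ := List.mem_map.1 hi
    have := c.blocks_pos hk
    omega
  · rw [List.sum_map_mul_left]
    simp [c.blocks_sum]
  · intro c _ c' _ h
    have h' := congrArg Composition.blocks h
    simp only at h'
    apply Composition.ext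
    exact List.map_injective_iff.2 (fun a b hab => by simpa using hab) h'
  · intro c _; simp
  · intro c _ hc
    by_cases hall : ∀ k ∈ c.blocks, Even k
    · exfalso
      apply hc
      have e : (c.blocks.map (fun k => k / 2)).map (fun k => 2 * k) = c.blocks := by
        rw [List.map_map]
        conv_rhs => rw [← List.map_id c.blocks]
        apply List.map_congr_left
        intro k hk
        obtain ⟨r, rfl⟩ := hall k hk
        simp; omega
      refine ⟨⟨c.blocks.map (fun k => k / 2), ?_, ?_⟩, by simp, ?_⟩
      · intro i hi
        obtain ⟨k, hk, rfl⟩ := List.mem_map.1 hi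
        have := c.blocks_pos hk
        obtain ⟨r, rfl⟩ := hall k hk
        omega
      · have h := congrArg List.sum e
        rw [List.sum_map_mul_left, c.blocks_sum] at h
        simp only [List.map_id'] at h
        omega
      · apply Composition.ext
        exact e
    · push Not at hall
      obtain ⟨k, hk, ho⟩ := hall
      apply List.prod_eq_zero
      have := List.le_sum_of_mem hk
      rw [c.blocks_sum] at this
      exact List.mem_map.2 ⟨k, hk, hodd k this (Nat.not_even_iff_odd.1 ho)⟩
  · intro c _
    simp [List.map_map, Function.comp_def]

theorem aux_odd (b : ℕ) (hb : 1 ≤ b) (Δ : Finset ℕ)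
    (hΔ : ∀ m ∈ Δ, Even m ∧ 2 * b ≤ m)
    (W : ℤ → MvPowerSeries ↥Δ ℚ) (hW : IsDSystemSolution (2 * b) Δ W) :
    ∀ j : ℤ, -1 ≤ j → j ≤ (2 * b : ℤ) → Odd j → W j = 0 := by
  obtain ⟨h2, hc, hs, ht⟩ := hW
  push_cast at hc hs ht
  simp only [aux_coe] at hs
  set T : Set ℤ := {j | -1 ≤ j ∧ j ≤ (2 * b : ℤ) ∧ Odd j} with hT
  have hTf : T.Finite := (Set.finite_Icc (-1 : ℤ) (2 * b : ℤ)).subset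
    fun j hj => ⟨hj.1, hj.2.1⟩
  set J := Ideal.span (W '' T) with hJ
  set m := RingHom.ker (MvPowerSeries.constantCoeff (σ := ↥Δ) (R := ℚ)) with hm
  have hmem : ∀ j, -1 ≤ j → j ≤ (2 * b : ℤ) → Odd j → W j ∈ J := fun j h1 h2 h3 =>
    Ideal.subset_span ⟨j, ⟨h1, h2, h3⟩, rfl⟩
  have key : ∀ t : ℕ, (t : ℤ) ≤ b → W (2 * b - 1 - 2 * t) ∈ m * J := by
    intro t
    induction t with
    | zero =>
      intro _
      rw [ht _ (by simp) (by simp)]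
      refine Ideal.sum_mem _ fun i _ => Ideal.mul_mem_mul ?_ ?_
      · simp [hm, RingHom.mem_ker]
      · refine Ideal.sum_mem _ fun bc hbc => Ideal.mul_mem_left _ _ ?_
        have h := (Finset.mem_filter.1 hbc).2.1
        obtain ⟨r, hr⟩ := (hΔ i i.2).1
        have : bc.1 ≠ 0 := by intro h0; rw [h0] at h; push_cast at h; omega
        exact Ideal.pow_mem_of_mem _ (hmem _ (by omega) (by omega) (by decide)) _ (by omega)
    | succ t ih =>
      intro hle
      push_cast at hle
      have ih := ih (by omega)
      set n : ℕ := (2 * (b : ℤ) - 1 - 2 * t).toNat with hn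
      have hnz : (n : ℤ) = 2 * (b : ℤ) - 1 - 2 * t := by omega
      have hno : Odd n := ⟨b - 1 - t, by omega⟩
      have e := hs (2 * b - 1 - 2 * (t + 1 : ℕ)) (by push_cast; omega) (by push_cast; omega)
      have e2 : (2 * (b : ℤ) - 1 - 2 * (t + 1 : ℕ) + 2).toNat = n := by push_cast; omega
      rw [e2] at e
      have hA := aux_comp m J (fun k : ℕ => W (k : ℤ))
        (fun k : ℕ => if Odd k then 0 else W (k : ℤ)) n (by omega)
        (fun k h1 h2 => by
          rw [hm, RingHom.mem_ker]; exact hc _ (by omega) (by omega))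
        (fun k h1 h2 => by
          split_ifs
          · exact m.zero_mem
          · rw [hm, RingHom.mem_ker]; exact hc _ (by omega) (by omega))
        (fun k h1 h2 => by
          split_ifs with ho
          · rw [sub_zero]; exact hmem _ (by omega) (by omega) (by exact_mod_cast ho)
          · simp)
      have hz : (∑ c : Composition n, (c.blocks.map
          (fun k : ℕ => if Odd k then (0 : MvPowerSeries ↥Δ ℚ) else W (k : ℤ))).prod) = 0 := by
        refine Finset.sum_eq_zero fun c _ => ?_
        have : ¬ ∀ k ∈ c.blocks, Even k := fun h => by
          have := aux_all_even _ h
          rw [c.blocks_sum] at this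
          exact (Nat.not_even_iff_odd.2 hno) this
        push Not at this
        obtain ⟨k, hk, ho⟩ := this
        apply List.prod_eq_zero
        exact List.mem_map.2 ⟨k, hk, by rw [if_pos (Nat.not_even_iff_odd.1 ho)]⟩
      rw [hz, ← e, if_pos hno, sub_zero, sub_zero, hnz] at hA
      simpa using Ideal.add_mem _ hA ih
  have := aux_nak (W '' T) (hTf.image W) (by
    rintro _ ⟨j, ⟨h1, h2, r, hr⟩, rfl⟩
    have := key (b - 1 - r).toNat (by omega)
    have e : 2 * (b : ℤ) - 1 - 2 * ((b - 1 - r).toNat : ℤ) = j := by omega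
    rwa [e] at this)
  exact fun j h1 h2 h3 => this _ ⟨j, ⟨h1, h2, h3⟩, rfl⟩

theorem aux_uniq (b : ℕ) (hb : 1 ≤ b) {σ : Type*} [Fintype σ] (deg : σ → ℕ)
    (V V' : ℤ → MvPowerSeries σ ℚ) (hV : IsBipSystemSolution b deg V)
    (hV' : IsBipSystemSolution b deg V') :
    ∀ i : ℤ, -1 ≤ i → i ≤ (b : ℤ) → V' i = V i := by
  obtain ⟨h2, hc, hs, ht⟩ := hV
  obtain ⟨h2', hc', hs', ht'⟩ := hV'
  simp only [aux_coe] at hs hs'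
  set T : Set ℤ := Set.Icc (-1) (b : ℤ) with hT
  set S := (fun j => V' j - V j) '' T with hS
  set J := Ideal.span S with hJ
  set m := RingHom.ker (MvPowerSeries.constantCoeff (σ := σ) (R := ℚ)) with hm
  have hmem : ∀ j, -1 ≤ j → j ≤ (b : ℤ) → V' j - V j ∈ J := fun j h1 h2 =>
    Ideal.subset_span ⟨j, ⟨h1, h2⟩, rfl⟩
  have top : ∀ j : ℤ, (b : ℤ) - 1 ≤ j → j ≤ b → V' j - V j ∈ m * J := by
    intro j h1 h2
    rw [ht _ h1 h2, ht' _ h1 h2, ← Finset.sum_sub_distrib]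
    refine Ideal.sum_mem _ fun i _ => ?_
    rw [← mul_sub]
    refine Ideal.mul_mem_mul ?_ ?_
    · simp [hm, RingHom.mem_ker]
    · refine Ideal.mem_of_dvd _ (sub_dvd_pow_sub_pow _ _ _) ?_
      rw [add_sub_add_left_eq_sub]
      exact hmem 0 (by omega) (by omega)
  have key : ∀ t : ℕ, (t : ℤ) ≤ b → V' (b - 1 - t) - V (b - 1 - t) ∈ m * J := by
    intro t
    induction t with
    | zero =>
      intro _
      exact top _ (by simp) (by simp)
    | succ t ih =>
      intro hle
      push_cast at hle
      have ih := ih (by omega)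
      set n : ℕ := ((b : ℤ) - 1 - t).toNat with hn
      have hnz : (n : ℤ) = (b : ℤ) - 1 - t := by omega
      have e := hs (b - 1 - (t + 1 : ℕ)) (by push_cast; omega) (by push_cast; omega)
      have e' := hs' (b - 1 - (t + 1 : ℕ)) (by push_cast; omega) (by push_cast; omega)
      have e2 : ((b : ℤ) - 1 - (t + 1 : ℕ) + 1).toNat = n := by push_cast; omega
      rw [e2] at e e'
      by_cases hn0 : n = 0
      · have : (b : ℤ) - 1 - (t + 1 : ℕ) = -1 := by push_cast; omega
        rw [this, h2, h2', sub_self]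
        exact Ideal.zero_mem _
      have hA := aux_comp m J (fun k : ℕ => V' (k : ℤ)) (fun k : ℕ => V (k : ℤ)) n (by omega)
        (fun k h1 h2 => by
          rw [hm, RingHom.mem_ker]; exact hc' _ (by omega) (by omega))
        (fun k h1 h2 => by
          rw [hm, RingHom.mem_ker]; exact hc _ (by omega) (by omega))
        (fun k h1 h2 => hmem _ (by omega) (by omega))
      rw [← e, ← e', hnz] at hA
      simpa using Ideal.add_mem _ hA ih
  have := aux_nak S ((Set.finite_Icc _ _).image _) (by
    rintro _ ⟨j, ⟨h1, h2⟩, rfl⟩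
    rcases eq_or_lt_of_le h2 with h | h
    · exact top j (by omega) (by omega)
    have := key (b - 1 - j).toNat (by omega)
    have e : (b : ℤ) - 1 - ((b - 1 - j).toNat : ℤ) = j := by omega
    rwa [e] at this)
  exact fun j h1 h2 => sub_eq_zero.1 (this _ ⟨j, ⟨h1, h2⟩, rfl⟩)

theorem aux_bip (b : ℕ) (hb : 1 ≤ b) (Δ : Finset ℕ)
    (hΔ : ∀ m ∈ Δ, Even m ∧ 2 * b ≤ m)
    (W : ℤ → MvPowerSeries ↥Δ ℚ) (hW : IsDSystemSolution (2 * b) Δ W) :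
    IsBipSystemSolution b (fun m : ↥Δ => (m : ℕ) / 2) (fun i : ℤ => W (2 * i)) := by
  have hodd := aux_odd b hb Δ hΔ W hW
  obtain ⟨h2, hc, hs, ht⟩ := hW
  push_cast at hc hs ht
  simp only [aux_coe] at hs
  refine ⟨by simpa using h2, fun j h1 h2 => hc _ (by omega) (by omega), ?_, ?_⟩
  · intro j h1 h2
    dsimp only
    simp only [aux_coe (fun k : ℤ => W (2 * k))]
    rw [hs _ (by omega) (by omega), aux_double (fun k : ℕ => W (k : ℤ)) (j + 1).toNat
      (2 * j + 2).toNat (by omega)]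
    · push_cast; rfl
    · intro k hk ho
      exact hodd _ (by omega) (by omega) (by exact_mod_cast ho)
  · intro j h1 h2
    dsimp only
    rw [ht _ (by omega) (by omega)]
    change ∑ i ∈ Finset.univ, _ = _
    refine Finset.sum_congr rfl fun i _ => ?_
    rw [mul_assoc]
    congr 1
    obtain ⟨⟨r, hr⟩, hi⟩ := hΔ i i.2
    have hd : (i : ℕ) / 2 = r := by omega
    simp only [hd, mul_zero]
    have hm1 : W (-1) = 0 := hodd _ (by omega) (by omega) (by decide)
    by_cases hjr : j + 1 ≤ (r : ℤ)
    · rw [if_pos hjr, Finset.sum_eq_single (0, r - j.toNat - 1)]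
      · have e : (i : ℕ) - 1 - 0 - (r - j.toNat - 1) = r + j.toNat := by omega
        rw [e, pow_zero, mul_one, Nat.cast_choose ℚ (by omega)]
        have e2 : 2 * r - 1 - (r - j.toNat - 1) = r + j.toNat := by omega
        have e3 : (i : ℕ) - 1 = 2 * r - 1 := by omega
        rw [e2, e3]
        congr 3
        simp [mul_comm]
      · rintro ⟨x, y⟩ hxy hne
        have h := (Finset.mem_filter.1 hxy).2.1
        have : x ≠ 0 := by
          rintro rfl
          apply hne
          simp only [Prod.mk.injEq, true_and]
          push_cast at h
          omega
        rw [hm1, zero_pow this, mul_zero]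
      · intro h
        exfalso
        apply h
        simp only [Finset.mem_filter, Finset.mem_product, Finset.mem_range]
        push_cast
        omega
    · rw [if_neg hjr, map_zero, zero_mul]
      refine Finset.sum_eq_zero fun bc hbc => ?_
      have h := (Finset.mem_filter.1 hbc).2.1
      omega

/-- Let `b ≥ 1`, `d = 2b`, and let `Δ` be a finite set of even integers each `≥ d`.  If
`(W_{−2}, …, W_d)` is the (unique) solution of the `d`-system for `Δ`, then `W_j = 0` for
every odd `j` with `−1 ≤ j ≤ d`; moreover, setting `V_i := W_{2i}` and identifying the
variable `x_{2i}` (`2i ∈ Δ`) with `y_i` (i.e. indexing the bipartite system by the elements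
`m ∈ Δ` with degree `m/2`, which identifies `Δ' = {i : 2i ∈ Δ}` with `Δ`), the family
`(V_{−1}, V_0, …, V_b)` is the unique solution of the `b`-bipartite system for `Δ'`. -/
theorem dSystem_even_case (b : ℕ) (hb : 1 ≤ b) (Δ : Finset ℕ)
    (hΔ : ∀ m ∈ Δ, Even m ∧ 2 * b ≤ m)
    (W : ℤ → MvPowerSeries ↥Δ ℚ) (hW : IsDSystemSolution (2 * b) Δ W) :
    (∀ j : ℤ, -1 ≤ j → j ≤ (2 * b : ℤ) → Odd j → W j = 0) ∧
    IsBipSystemSolution b (fun m : ↥Δ => (m : ℕ) / 2) (fun i : ℤ => W (2 * i)) ∧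
    (∀ V' : ℤ → MvPowerSeries ↥Δ ℚ,
      IsBipSystemSolution b (fun m : ↥Δ => (m : ℕ) / 2) V' →
        ∀ i : ℤ, -1 ≤ i → i ≤ (b : ℤ) → V' i = W (2 * i)) := by
  have hb' := aux_bip b hb Δ hΔ W hW
  exact ⟨aux_odd b hb Δ hΔ W hW, hb', fun V' hV' => aux_uniq b hb _ _ V' hb' hV'⟩
end

section
/- Let d ≥ 1 be an integer and let Δ be a finite set of integers each ≥ d. Every member W_j (−2 ≤ j ≤ d) of the unique solution of the d-system for Δ is algebraic over the polynomial ring ℚ[x_i : i ∈ Δ]: there exists a nonzero one-variable polynomial P with coefficients in ℚ[x_i : i ∈ Δ] such that P(W_j) = 0 in the power series ring ℚ[[x_i : i ∈ Δ]]. -/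
open Polynomial TensorProduct KaehlerDifferential in
theorem alg_of_D_eq_zero {R F : Type} [CommRing R] [IsDomain R] [Field F] [Algebra R F] [CharZero F]
    (x : F) (hx : KaehlerDifferential.D R F x = 0) : IsAlgebraic R x := by
  by_contra htr
  have htr : Transcendental R x := htr
  have hinj : Function.Injective (aeval (R := R) x) := transcendental_iff_injective.mp htr
  let : Algebra R[X] F := (aeval (R := R) x).toAlgebra
  have hmap : ∀ p : R[X], algebraMap R[X] F p = aeval x p := fun p => rfl
  have : IsScalarTower R R[X] F := IsScalarTower.of_algebraMap_eq (fun r => by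
    rw [hmap]; simp)
  have : FaithfulSMul R[X] F := (faithfulSMul_iff_algebraMap_injective _ _).2 hinj
  let Q := FractionRing R[X]
  let : Algebra Q F := FractionRing.liftAlgebra R[X] F
  have : IsScalarTower R[X] Q F := inferInstance
  have : CharZero Q := (algebraMap Q F).charZero_iff (algebraMap Q F).injective |>.2 inferInstance
  obtain ⟨ι, v, hv⟩ := exists_isTranscendenceBasis' Q F
  have : Algebra.IsAlgebraic (IntermediateField.adjoin Q (Set.range v)) F := hv.isAlgebraic_field
  have : Algebra.FormallySmooth Q F :=
    Algebra.FormallySmooth.of_algebraicIndependent_of_isSeparable hv.1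
  have : Algebra.FormallySmooth R[X] Q :=
    Algebra.FormallySmooth.of_isLocalization (nonZeroDivisors R[X])
  have : Algebra.FormallySmooth R[X] F := .comp R[X] Q F
  have hs : Subsingleton (Algebra.H1Cotangent R[X] F) := Algebra.FormallySmooth.subsingleton_h1Cotangent
  have hex := Algebra.H1Cotangent.exact_δ_mapBaseChange R R[X] F
  have h0 : KaehlerDifferential.mapBaseChange R R[X] F (1 ⊗ₜ D R R[X] X) = 0 := by
    rw [KaehlerDifferential.mapBaseChange_tmul, KaehlerDifferential.map_D, hmap, aeval_X, hx, smul_zero]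
  obtain ⟨y, hy⟩ := (hex _).1 h0
  have hy0 : y = 0 := Subsingleton.elim _ _
  rw [hy0, map_zero] at hy
  have := congrArg (fun t => (TensorProduct.rid R[X] F) ((polynomialEquiv R).toLinearMap.lTensor F t)) hy
  simp at this

theorem der_prod_mem {R A M : Type} [CommRing R] [CommRing A] [Algebra R A] [AddCommGroup M] [Module A M]
    [Module R M] (δ : Derivation R A M) (N : Submodule A M) (l : List A) (h : ∀ a ∈ l, δ a ∈ N) :
    δ l.prod ∈ N := by
  induction l with
  | nil => simp
  | cons a t ih =>
    rw [List.prod_cons, Derivation.leibniz]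
    exact N.add_mem (N.smul_mem _ (ih fun b hb => h b (by simp [hb]))) (N.smul_mem _ (h a (by simp)))

theorem pow_mem' {R A M : Type} [CommRing R] [CommRing A] [Algebra R A] [AddCommGroup M] [Module A M]
    [Module R M] (δ : Derivation R A M) (N : Submodule A M) (a : A) (n : ℕ) (h : δ a ∈ N) :
    δ (a ^ n) ∈ N := by
  rw [← List.prod_replicate]
  exact der_prod_mem δ N _ (fun b hb => by rw [List.eq_of_mem_replicate hb]; exact h)

theorem list_mem {R A M : Type} [CommRing R] [CommRing A] [Algebra R A] [AddCommGroup M] [Module A M]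
    [Module R M] (δ : Derivation R A M) (m : Ideal A) (N : Submodule A M) (l : List A)
    (h : ∀ a ∈ l, a ∈ m ∧ δ a ∈ N) (hl : 2 ≤ l.length) :
    δ l.prod ∈ m • N := by
  match l, hl with
  | a :: b :: t, _ =>
    rw [List.prod_cons, Derivation.leibniz]
    refine Submodule.add_mem _ (Submodule.smul_mem_smul (h a (by simp)).1
      (der_prod_mem δ N _ fun c hc => (h c (by simp_all)).2)) ?_
    refine Submodule.smul_mem_smul ?_ (h a (by simp)).2
    rw [List.prod_cons]
    exact Ideal.mul_mem_right _ _ (h b (by simp)).1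

/-- derivations over the polynomial ring kill the solution -/
theorem der_zero (d : ℕ) (hd : 1 ≤ d) (Δ : Finset ℕ)
    (W : ℤ → MvPowerSeries ↥Δ ℚ) (hW : IsDSystemSolution d Δ W)
    {M : Type} [AddCommGroup M] [Module (MvPowerSeries ↥Δ ℚ) M] [Module (MvPolynomial ↥Δ ℚ) M]
    (δ : Derivation (MvPolynomial ↥Δ ℚ) (MvPowerSeries ↥Δ ℚ) M) (j : ℤ) (h1 : -2 ≤ j) (h2 : j ≤ d) :
    δ (W j) = 0 := by
  obtain ⟨w2, wc, wl0, wh⟩ := hW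
  have wl : ∀ j : ℤ, -2 ≤ j → j ≤ (d : ℤ) - 3 → W j = ∑ c : Composition (j + 2).toNat,
      ((c.blocks.map (fun k : ℕ => W (k : ℤ))).prod) := by
    intro j h1 h2
    rw [wl0 j h1 h2]
    refine Finset.sum_congr rfl fun c _ => ?_
    congr 1
    simp [Function.comp_def, ← List.map_eq_flatMap]
  obtain rfl | h1 : j = -2 ∨ -1 ≤ j := by omega
  · rw [w2]; simp
  set m := IsLocalRing.maximalIdeal (MvPowerSeries ↥Δ ℚ) with hm
  have memm : ∀ a : MvPowerSeries ↥Δ ℚ, MvPowerSeries.constantCoeff a = 0 → a ∈ m := by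
    intro a ha
    rw [hm, IsLocalRing.mem_maximalIdeal, mem_nonunits_iff, MvPowerSeries.isUnit_iff_constantCoeff, ha]
    simp
  classical
  let S : Finset M := (Finset.Icc (-1 : ℤ) d).image (fun j => δ (W j))
  set N : Submodule (MvPowerSeries ↥Δ ℚ) M := Submodule.span _ (S : Set M) with hN
  have hWN : ∀ j : ℤ, -1 ≤ j → j ≤ d → δ (W j) ∈ N := by
    intro j h1 h2
    apply Submodule.subset_span
    simp only [S, Finset.coe_image]
    exact ⟨j, by simp [h1, h2], rfl⟩
  have hC : ∀ q : ℚ, δ (MvPowerSeries.C (σ := ↥Δ) q) = 0 := by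
    intro q
    have : MvPowerSeries.C (σ := ↥Δ) q = algebraMap (MvPolynomial ↥Δ ℚ) _ (MvPolynomial.C q) := by
      rw [MvPowerSeries.algebraMap_apply']; simp
    rw [this, Derivation.map_algebraMap]
  have hX : ∀ i, δ (MvPowerSeries.X (σ := ↥Δ) (R := ℚ) i) = 0 := by
    intro q
    have : MvPowerSeries.X (σ := ↥Δ) (R := ℚ) q = algebraMap (MvPolynomial ↥Δ ℚ) _ (MvPolynomial.X q) := by
      rw [MvPowerSeries.algebraMap_apply']; simp
    rw [this, Derivation.map_algebraMap]
  have key : ∀ n : ℕ, ∀ j : ℤ, -1 ≤ j → j ≤ d → (d - j).toNat = n → δ (W j) ∈ m • N := by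
    intro n
    induction n using Nat.strong_induction_on with
    | _ n ih =>
    intro j h1 h2 hn
    by_cases hj : j ≤ (d : ℤ) - 3
    · rw [wl j (by omega) hj, map_sum]
      refine Submodule.sum_mem _ fun c _ => ?_
      have hb : ∀ k ∈ c.blocks, 1 ≤ k ∧ k ≤ (j + 2).toNat := fun k hk =>
        ⟨c.one_le_blocks hk, c.blocks_le hk⟩
      by_cases hl : 2 ≤ c.blocks.length
      · refine list_mem δ m N _ ?_ (by simpa using hl)
        intro a ha
        obtain ⟨k, hk, rfl⟩ := List.mem_map.1 ha
        have := hb k hk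
        exact ⟨memm _ (wc _ (by omega) (by omega)), hWN _ (by omega) (by omega)⟩
      · have hs := c.blocks_sum
        match hcb : c.blocks with
        | [] => rw [hcb] at hs; simp at hs; omega
        | [k] =>
          rw [hcb] at hs
          simp at hs
          simp only [List.map_cons, List.map_nil, List.prod_cons, List.prod_nil, mul_one]
          exact ih _ (by omega) (k : ℤ) (by omega) (by omega) rfl
        | _ :: _ :: _ => rw [hcb] at hl; simp at hl
    · rw [wh j (by omega) h2, map_sum]
      refine Submodule.sum_mem _ fun i _ => ?_
      rw [Derivation.leibniz, hX, smul_zero, add_zero]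
      refine Submodule.smul_mem_smul (memm _ (by simp)) ?_
      rw [map_sum]
      refine Submodule.sum_mem _ fun bc _ => ?_
      rw [Derivation.leibniz, Derivation.leibniz, hC, smul_zero, add_zero]
      refine N.add_mem (N.smul_mem _ (pow_mem' _ _ _ _ (hWN _ le_rfl (by omega))))
        (N.smul_mem _ (N.smul_mem _ (pow_mem' _ _ _ _ ?_)))
      rw [map_add]
      simpa using hWN 0 (by omega) (by omega)
  have hbot : N = ⊥ := by
    refine Submodule.eq_bot_of_le_smul_of_le_jacobson_bot m N ⟨S, rfl⟩ ?_ (IsLocalRing.maximalIdeal_le_jacobson _)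
    rw [hN, Submodule.span_le]
    intro y hy
    simp only [S, Finset.coe_image] at hy
    obtain ⟨k, hk, rfl⟩ := hy
    simp at hk
    exact key _ k hk.1 hk.2 rfl
  have := hWN j h1 h2
  rw [hbot] at this
  simpa using this


/-- For `d ≥ 1` and `Δ` a finite set of integers each `≥ d`, every member `W_j`
(`−2 ≤ j ≤ d`) of the (unique) solution of the `d`-system for `Δ` is algebraic over the
polynomial ring `ℚ[x_i : i ∈ Δ]`: there is a nonzero one-variable polynomial `P` with
coefficients in `ℚ[x_i : i ∈ Δ]` such that `P(W_j) = 0` in `ℚ[[x_i : i ∈ Δ]]` (the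
polynomial ring being embedded canonically into the power series ring). -/
theorem dSystem_algebraic (d : ℕ) (hd : 1 ≤ d) (Δ : Finset ℕ) (hΔ : ∀ i ∈ Δ, d ≤ i)
    (W : ℤ → MvPowerSeries ↥Δ ℚ) (hW : IsDSystemSolution d Δ W) :
    ∀ j : ℤ, -2 ≤ j → j ≤ (d : ℤ) →
      ∃ P : Polynomial (MvPolynomial ↥Δ ℚ), P ≠ 0 ∧
        Polynomial.eval₂ MvPolynomial.coeToMvPowerSeries.ringHom (W j) P = 0 := by
  intro j h1 h2
  have : IsDomain (MvPowerSeries ↥Δ ℚ) := NoZeroDivisors.to_isDomain _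
  let F := FractionRing (MvPowerSeries ↥Δ ℚ)
  have : CharZero F :=
    ((algebraMap (MvPowerSeries ↥Δ ℚ) F).charZero_iff (IsFractionRing.injective _ _)).1
      (((MvPowerSeries.C (σ := ↥Δ) (R := ℚ)).charZero_iff
        (MvPowerSeries.C_injective)).1 inferInstance)
  let D' := (KaehlerDifferential.D (MvPolynomial ↥Δ ℚ) F).compAlgebraMap (MvPowerSeries ↥Δ ℚ)
  have h := der_zero d hd Δ W hW D' j h1 h2
  obtain ⟨P, hP, hP0⟩ := alg_of_D_eq_zero (R := MvPolynomial ↥Δ ℚ) (F := F) (algebraMap _ F (W j)) h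
  refine ⟨P, hP, ?_⟩
  rw [Polynomial.aeval_algebraMap_apply] at hP0
  have h3 := (map_eq_zero_iff _ (IsFractionRing.injective (MvPowerSeries ↥Δ ℚ) F)).1 hP0
  rw [Polynomial.aeval_def] at h3
  have h4 : (MvPolynomial.coeToMvPowerSeries.ringHom :
      MvPolynomial ↥Δ ℚ →+* MvPowerSeries ↥Δ ℚ) = algebraMap _ _ := by
    refine RingHom.ext fun p => ?_
    rw [MvPowerSeries.algebraMap_apply']
    simp
  rw [h4]
  exact h3
end

section
/- Fix an integer k ≥ 2 and let R ∈ ℚ[[x_2, …, x_k]] satisfy R = 1 + Σ_{i=2}^k x_i · C(2i−1, i−2) · R^{i+1}. Then for every integer a ≥ 1 and all natural numbers n_2, …, n_k, the coefficient of the monomial x_2^{n_2}·…·x_k^{n_k} in R^a equals a · (Σ_{i=2}^k (i+1)·n_i + a − 1)! / ( (Σ_{i=2}^k i·n_i + a)! · n_2!·…·n_k! ) · ∏_{i=2}^k C(2i−1, i−2)^{n_i}. -/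
open Finset in
theorem aux_G {σ : Type*} [Fintype σ] [DecidableEq σ] (w : σ → ℕ) (c : σ → ℚ) (m : σ →₀ ℕ) (i : σ) (a : ℕ) :
    c i * (((a + w i + 1 : ℕ) : ℚ) * ((∑ j, (w j + 1) * m j + (a + w i + 1) - 1).factorial : ℚ) /
      (((∑ j, w j * m j + (a + w i + 1)).factorial : ℚ) * ∏ j, ((m j).factorial : ℚ)) * ∏ j, c j ^ m j)
    = ((a + w i + 1 : ℕ) : ℚ) * ((m + Finsupp.single i 1 : σ →₀ ℕ) i : ℕ) *
      ((∑ j, (w j + 1) * (m + Finsupp.single i 1 : σ →₀ ℕ) j + a - 1).factorial : ℚ) /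
      (((∑ j, w j * (m + Finsupp.single i 1 : σ →₀ ℕ) j + a + 1).factorial : ℚ) *
        ∏ j, (((m + Finsupp.single i 1 : σ →₀ ℕ) j).factorial : ℚ)) * ∏ j, c j ^ (m + Finsupp.single i 1 : σ →₀ ℕ) j := by
  have h1 : ∑ j, (w j + 1) * (m + Finsupp.single i 1 : σ →₀ ℕ) j = ∑ j, (w j + 1) * m j + (w i + 1) := by
    simp [mul_add, Finset.sum_add_distrib, Finsupp.single_apply]
  have h2 : ∑ j, w j * (m + Finsupp.single i 1 : σ →₀ ℕ) j = ∑ j, w j * m j + w i := by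
    simp [mul_add, Finset.sum_add_distrib, Finsupp.single_apply]
  have h3 : ∏ j, c j ^ (m + Finsupp.single i 1 : σ →₀ ℕ) j = (∏ j, c j ^ m j) * c i := by
    simp only [Finsupp.add_apply, pow_add, Finset.prod_mul_distrib, Finsupp.single_apply, pow_ite, pow_one, pow_zero]
    simp
  have h4 : ∏ j, (((m + Finsupp.single i 1 : σ →₀ ℕ) j).factorial : ℚ)
      = (∏ j, ((m j).factorial : ℚ)) * (m i + 1) := by
    have : ∀ j, (((m + Finsupp.single i 1 : σ →₀ ℕ) j).factorial : ℚ)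
        = ((m j).factorial : ℚ) * (if i = j then (m i + 1 : ℚ) else 1) := by
      intro j
      by_cases h : i = j
      · subst h
        simp [Nat.factorial_succ, mul_comm]
      · simp [h]
    simp only [this, Finset.prod_mul_distrib]
    simp
  rw [h1, h2, h3, h4]
  have e1 : ∑ j, (w j + 1) * m j + (w i + 1) + a - 1 = ∑ j, (w j + 1) * m j + (a + w i + 1) - 1 := by
    omega
  have e2 : ∑ j, w j * m j + w i + a + 1 = ∑ j, w j * m j + (a + w i + 1) := by omega
  rw [e1, e2]
  have e3 : (((m + Finsupp.single i 1 : σ →₀ ℕ) i : ℕ) : ℚ) = m i + 1 := by simp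
  rw [e3]
  have p1 : (∏ j, ((m j).factorial : ℚ)) ≠ 0 :=
    Finset.prod_ne_zero_iff.2 fun j _ => by positivity
  have p2 : (m i + 1 : ℚ) ≠ 0 := by positivity
  field_simp

theorem aux_main {σ : Type*} [Fintype σ] [DecidableEq σ] (w : σ → ℕ) (c : σ → ℚ)
    (R : MvPowerSeries σ ℚ)
    (hR : R = 1 + ∑ i, MvPowerSeries.X i * MvPowerSeries.C (c i) * R ^ (w i + 1)) (d : ℕ) :
    ∀ (n : σ →₀ ℕ), ∑ j, n j = d → ∀ a : ℕ, (1 ≤ a ∨ n ≠ 0) →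
    MvPowerSeries.coeff n (R ^ a) =
      (a : ℚ) * ((∑ j, (w j + 1) * n j + a - 1).factorial : ℚ) /
      (((∑ j, w j * n j + a).factorial : ℚ) * ∏ j, ((n j).factorial : ℚ)) * ∏ j, c j ^ n j := by
  have hrec : ∀ a n, MvPowerSeries.coeff n (R ^ (a + 1)) = MvPowerSeries.coeff n (R ^ a) +
      ∑ i, c i * MvPowerSeries.coeff n (MvPowerSeries.X i * R ^ (a + w i + 1)) := by
    intro a n
    have : R ^ (a + 1) = R ^ a +
        ∑ i, MvPowerSeries.C (c i) * (MvPowerSeries.X i * R ^ (a + w i + 1)) := by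
      calc R ^ (a + 1) = R ^ a * R := pow_succ _ _
        _ = R ^ a * (1 + ∑ i, MvPowerSeries.X i * MvPowerSeries.C (c i) * R ^ (w i + 1)) := by
          rw [← hR]
        _ = _ := by
          rw [mul_add, mul_one, Finset.mul_sum]
          congr 1
          refine Finset.sum_congr rfl fun i _ => ?_
          ring
    rw [this, map_add, map_sum]
    simp only [MvPowerSeries.coeff_C_mul]
  have hc : MvPowerSeries.constantCoeff R = 1 := by
    rw [hR]; simp
  induction d with
  | zero =>
    intro n hn a ha
    have hn0 : n = 0 := by
      ext j
      simpa using (Finset.sum_eq_zero_iff.1 hn) j (Finset.mem_univ j)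
    subst hn0
    have ha : 1 ≤ a := by simpa using ha
    obtain ⟨b, rfl⟩ : ∃ b, a = b + 1 := ⟨a - 1, by omega⟩
    have : (b.factorial : ℚ) ≠ 0 := by positivity
    simp [hc, Nat.factorial_succ]
    field_simp
  | succ d ih =>
    intro n hn a _
    have hn0 : n ≠ 0 := by
      rintro rfl
      simp at hn
    have key : ∀ a i, c i * MvPowerSeries.coeff n (MvPowerSeries.X i * R ^ (a + w i + 1)) =
        ((a + w i + 1 : ℕ) : ℚ) * (n i : ℕ) *
      ((∑ j, (w j + 1) * n j + a - 1).factorial : ℚ) /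
      (((∑ j, w j * n j + a + 1).factorial : ℚ) * ∏ j, ((n j).factorial : ℚ)) * ∏ j, c j ^ n j := by
      intro a i
      by_cases hi : n i = 0
      · have : MvPowerSeries.coeff n (MvPowerSeries.X i * R ^ (a + w i + 1)) = 0 := by
          rw [MvPowerSeries.X, MvPowerSeries.coeff_monomial_mul, if_neg]
          intro h
          have := h i
          simp [hi] at this
        rw [this, hi]
        simp
      · obtain ⟨m, rfl⟩ : ∃ m, n = m + Finsupp.single i 1 := by
          refine ⟨n - Finsupp.single i 1, (tsub_add_cancel_of_le ?_).symm⟩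
          simpa using Nat.one_le_iff_ne_zero.2 hi
        rw [← aux_G, add_comm m, MvPowerSeries.X, MvPowerSeries.coeff_add_monomial_mul, one_mul,
          ih m ?_ _ (Or.inl (by omega))]
        simp [Finset.sum_add_distrib, Finsupp.single_apply] at hn
        exact hn
    induction a with
    | zero => simp [MvPowerSeries.coeff_one, hn0]
    | succ a iha =>
      rw [hrec, iha (Or.inr hn0)]
      simp only [key]
      have hsum : ∑ j, (w j + 1) * n j = ∑ j, w j * n j + (d + 1) := by
        rw [← hn, ← Finset.sum_add_distrib]
        exact Finset.sum_congr rfl fun j _ => by ring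
      have hs2 : ∑ i, ((a + w i + 1 : ℕ) : ℚ) * (n i : ℕ) =
          (a + 1) * (d + 1) + ((∑ j, w j * n j : ℕ) : ℚ) := by
        have : (d + 1 : ℚ) = ∑ j, (n j : ℚ) := by exact_mod_cast hn.symm
        rw [this, Finset.mul_sum]
        push_cast
        rw [← Finset.sum_add_distrib]
        exact Finset.sum_congr rfl fun j _ => by ring
      rw [← Finset.sum_mul, ← Finset.sum_div, ← Finset.sum_mul, hs2, hsum]
      have p1 : (∏ j, ((n j).factorial : ℚ)) ≠ 0 :=
        Finset.prod_ne_zero_iff.2 fun j _ => by positivity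
      generalize (∏ j, ((n j).factorial : ℚ)) = P at *
      generalize (∏ j, c j ^ n j) = Q
      generalize ∑ j, w j * n j = S
      have e1 : S + (d + 1) + a - 1 = S + d + a := by omega
      have e2 : S + (d + 1) + (a + 1) - 1 = S + d + a + 1 := by omega
      rw [e1, e2, ← add_assoc S a 1, Nat.factorial_succ, Nat.factorial_succ]
      have p2 : ((S + a).factorial : ℚ) ≠ 0 := by positivity
      have p3 : (S + a + 1 : ℚ) ≠ 0 := by positivity
      push_cast
      field_simp
      ring

/-- **Lagrange-inversion coefficients for simple bipartite maps.**  Let `k ≥ 2` and let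
`R ∈ ℚ[[x_2, …, x_k]]` satisfy `R = 1 + Σ_{i=2}^k x_i · C(2i−1, i−2) · R^{i+1}`.  Then for
every integer `a ≥ 1` and all naturals `n_2, …, n_k`, the coefficient of
`x_2^{n_2}·…·x_k^{n_k}` in `R^a` equals
`a · (Σ(i+1)·n_i + a − 1)! / ((Σ i·n_i + a)! · n_2!·…·n_k!) · ∏ C(2i−1, i−2)^{n_i}`. -/
theorem simple_bipartite_R_coeff (k : ℕ) (hk : 2 ≤ k)
    (R : MvPowerSeries ↥(Finset.Icc 2 k) ℚ)
    (hR : R = 1 + ∑ i ∈ (Finset.Icc 2 k).attach,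
        MvPowerSeries.X i *
          MvPowerSeries.C (σ := ↥(Finset.Icc 2 k)) (R := ℚ) (((2 * (i : ℕ) - 1).choose ((i : ℕ) - 2) : ℚ)) *
          R ^ ((i : ℕ) + 1))
    (a : ℕ) (ha : 1 ≤ a) (n : ↥(Finset.Icc 2 k) → ℕ) :
    MvPowerSeries.coeff (R := ℚ) (Finsupp.equivFunOnFinite.symm n) (R ^ a) =
      (a : ℚ) *
          (((∑ i : ↥(Finset.Icc 2 k), ((i : ℕ) + 1) * n i) + a - 1).factorial : ℚ) /
          ((((∑ i : ↥(Finset.Icc 2 k), (i : ℕ) * n i) + a).factorial : ℚ) *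
            ∏ i : ↥(Finset.Icc 2 k), ((n i).factorial : ℚ)) *
        ∏ i : ↥(Finset.Icc 2 k), (((2 * (i : ℕ) - 1).choose ((i : ℕ) - 2) : ℚ)) ^ n i := by
  refine aux_main (fun i : ↥(Finset.Icc 2 k) => (i : ℕ))
    (fun i => ((2 * (i : ℕ) - 1).choose ((i : ℕ) - 2) : ℚ)) R ?_ _
    (Finsupp.equivFunOnFinite.symm n) rfl a (Or.inl ha)
  exact hR
end

section
/- In the ring ℚ[[t]] of formal power series over ℚ, the system of four equations M = 1 + t·S·M + t²·R·M², B = 1 + t·S·B + 2·t²·R·M·B, R = 1 + t²·B·M·R, S = t³·B·M²·R² has exactly one solution (M, B, R, S), namely M = α, B = α², R = α, S = t³·α⁶, where α is the unique formal power series in ℚ[[t]] satisfying α = 1 + t²·α⁴. -/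
open PowerSeries in
/-- The system of four equations (in `ℚ[[t]]`, with `t = PowerSeries.X`):
`M = 1 + t·S·M + t²·R·M²`, `B = 1 + t·S·B + 2·t²·R·M·B`, `R = 1 + t²·B·M·R`,
`S = t³·B·M²·R²`. -/
def LooplessSystem (M B R S : PowerSeries ℚ) : Prop :=
  M = 1 + X * S * M + X ^ 2 * R * M ^ 2 ∧
  B = 1 + X * S * B + 2 * X ^ 2 * R * M * B ∧
  R = 1 + X ^ 2 * B * M * R ∧
  S = X ^ 3 * B * M ^ 2 * R ^ 2

theorem dvd_mul_sub_aux {A : Type*} [CommRing A] {c a a' b b' : A} (h : c ∣ a - a')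
    (k : c ∣ b - b') : c ∣ a * b - a' * b' := by
  have : a * b - a' * b' = (a - a') * b + a' * (b - b') := by ring
  rw [this]
  exact dvd_add (h.mul_right _) (k.mul_left _)

open PowerSeries in
theorem looplessSystem_dvd {M B R S M' B' R' S' : PowerSeries ℚ}
    (h : LooplessSystem M B R S) (h' : LooplessSystem M' B' R' S') (n : ℕ) :
    X ^ n ∣ M - M' ∧ X ^ n ∣ B - B' ∧ X ^ n ∣ R - R' ∧ X ^ n ∣ S - S' := by
  obtain ⟨h1, h2, h3, h4⟩ := h
  obtain ⟨k1, k2, k3, k4⟩ := h'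
  induction n with
  | zero => simp
  | succ n ih =>
    obtain ⟨dM, dB, dR, dS⟩ := ih
    have dMM := dvd_mul_sub_aux dM dM
    have dRR := dvd_mul_sub_aux dR dR
    have dRM := dvd_mul_sub_aux dR dM
    have dBM := dvd_mul_sub_aux dB dM
    refine ⟨?_, ?_, ?_, ?_⟩
    · have d := dvd_add (dvd_mul_sub_aux dS dM) ((dvd_mul_sub_aux dR dMM).mul_left X)
      have e : M - M' = X * ((S * M - S' * M') + X * (R * (M * M) - R' * (M' * M'))) := by
        linear_combination h1 - k1
      rw [e, pow_succ']
      exact mul_dvd_mul_left X d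
    · have d := dvd_add (dvd_mul_sub_aux dS dB) ((dvd_mul_sub_aux dRM dB).mul_left (2 * X))
      have e : B - B' = X * ((S * B - S' * B') + 2 * X * (R * M * B - R' * M' * B')) := by
        linear_combination h2 - k2
      rw [e, pow_succ']
      exact mul_dvd_mul_left X d
    · have d := (dvd_mul_sub_aux dBM dR).mul_left X
      have e : R - R' = X * (X * (B * M * R - B' * M' * R')) := by
        linear_combination h3 - k3
      rw [e, pow_succ']
      exact mul_dvd_mul_left X d
    · have d := (dvd_mul_sub_aux dB (dvd_mul_sub_aux dMM dRR)).mul_left (X ^ 2)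
      have e : S - S' = X * (X ^ 2 * (B * (M * M * (R * R)) - B' * (M' * M' * (R' * R')))) := by
        linear_combination h4 - k4
      rw [e, pow_succ']
      exact mul_dvd_mul_left X d

open PowerSeries in
theorem eq_of_X_pow_dvd_aux {a b : PowerSeries ℚ} (h : ∀ n : ℕ, X ^ n ∣ a - b) : a = b := by
  rw [← sub_eq_zero]
  ext n
  simpa using (X_pow_dvd_iff.mp (h (n + 1))) n (Nat.lt_succ_self n)

open PowerSeries in
/-- In `ℚ[[t]]`, the system `M = 1 + t·S·M + t²·R·M²`, `B = 1 + t·S·B + 2·t²·R·M·B`,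
`R = 1 + t²·B·M·R`, `S = t³·B·M²·R²` has exactly one solution `(M, B, R, S)`, namely
`M = α`, `B = α²`, `R = α`, `S = t³·α⁶`, where `α` is the unique formal power series
satisfying `α = 1 + t²·α⁴`. -/
theorem looplessSystem_unique_solution (α : PowerSeries ℚ)
    (hα : α = 1 + X ^ 2 * α ^ 4) :
    LooplessSystem α (α ^ 2) α (X ^ 3 * α ^ 6) ∧
    ∀ M B R S : PowerSeries ℚ, LooplessSystem M B R S →
      M = α ∧ B = α ^ 2 ∧ R = α ∧ S = X ^ 3 * α ^ 6 := by
  have sol : LooplessSystem α (α ^ 2) α (X ^ 3 * α ^ 6) := by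
    refine ⟨?_, ?_, ?_, ?_⟩
    · linear_combination (1 + X ^ 2 * α ^ 3) * hα
    · linear_combination (α + 1 + X ^ 2 * α ^ 4) * hα
    · linear_combination hα
    · ring
  refine ⟨sol, fun M B R S h => ?_⟩
  have d := looplessSystem_dvd h sol
  exact ⟨eq_of_X_pow_dvd_aux fun n => (d n).1, eq_of_X_pow_dvd_aux fun n => (d n).2.1,
    eq_of_X_pow_dvd_aux fun n => (d n).2.2.1, eq_of_X_pow_dvd_aux fun n => (d n).2.2.2⟩
end

section
/- Let α ∈ ℚ[[t]] be a formal power series satisfying α = 1 + t·α⁴. Then for every natural number n, the coefficient of t^n in the power series α²·(2 − α) equals 2·(4n+1)! / ((n+1)!·(3n+2)!). -/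
open PowerSeries in
lemma coeff_theta (f : PowerSeries ℚ) (n : ℕ) :
    coeff n (X * derivative ℚ f) = n * coeff n f := by
  cases n with
  | zero => simp
  | succ k => rw [coeff_succ_X_mul, coeff_derivative]; push_cast; ring

open PowerSeries in
lemma coeff_op (p q : ℕ) (f : PowerSeries ℚ) (n : ℕ) :
    coeff n ((p : PowerSeries ℚ) * (X * derivative ℚ f) + (q : PowerSeries ℚ) * f)
      = (p * n + q) * coeff n f := by
  rw [map_add, ← nsmul_eq_mul, ← nsmul_eq_mul, map_nsmul, map_nsmul, coeff_theta]
  simp only [nsmul_eq_mul]; ring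

open PowerSeries in
theorem alpha_facts (α : PowerSeries ℚ) (hα : α = 1 + X * α ^ 4) (n : ℕ) :
    ((n : ℚ) + 1) * coeff n (α ^ 2 * (2 - α)) = coeff n (α ^ 2) ∧
    (3 * (n + 1 : ℚ) + 2) * (3 * (n + 1 : ℚ) + 1) * (3 * (n + 1)) * coeff (n + 1) (α ^ 2) =
      4 * ((4 * n + 5) * (4 * n + 3) * (4 * n + 2) * coeff n (α ^ 2)) ∧
    coeff 0 (α ^ 2) = 1 := by
  have h0 : constantCoeff α = 1 := by rw [hα]; simp
  obtain ⟨w, hw⟩ : ∃ w, w * (4 - 3 * α) = 1 := by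
    refine ⟨(4 - 3 * α)⁻¹, PowerSeries.inv_mul_cancel _ ?_⟩
    have h4 : constantCoeff (4 : PowerSeries ℚ) = 4 := map_ofNat _ 4
    have h3 : constantCoeff (3 : PowerSeries ℚ) = 3 := map_ofNat _ 3
    rw [map_sub, map_mul, h0, h4, h3]; norm_num
  have n3 : derivative ℚ (3 : PowerSeries ℚ) = 0 := by
    simpa using (derivative ℚ).map_natCast 3
  have n4 : derivative ℚ (4 : PowerSeries ℚ) = 0 := by
    simpa using (derivative ℚ).map_natCast 4
  have n2 : derivative ℚ (2 : PowerSeries ℚ) = 0 := by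
    simpa using (derivative ℚ).map_natCast 2
  have hd0 : derivative ℚ α = α ^ 4 + X * (4 * α ^ 3 * derivative ℚ α) := by
    conv_lhs => rw [hα]
    simp [Derivation.leibniz, Derivation.leibniz_pow]
    ring
  have hd : X * derivative ℚ α = w * α * (α - 1) := by
    have : X * derivative ℚ α * (4 - 3 * α) = α * (α - 1) := by
      linear_combination X * α * hd0 + (-4 * X * derivative ℚ α - α) * hα
    linear_combination w * this - X * derivative ℚ α * hw
  have hdw : X * derivative ℚ w = 3 * w ^ 3 * α * (α - 1) := by
    have h := congrArg (derivative ℚ) hw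
    simp only [Derivation.leibniz, map_sub, n3, n4, smul_eq_mul, Derivation.map_one_eq_zero] at h
    linear_combination X * w * h - X * derivative ℚ w * hw + 3 * w ^ 2 * hd
  have hX : X * α ^ 4 = α - 1 := by linear_combination -hα
  have hθF : ((1 : ℕ) : PowerSeries ℚ) * (X * derivative ℚ (α ^ 2 * (2 - α)))
      + ((1 : ℕ) : PowerSeries ℚ) * (α ^ 2 * (2 - α)) = α ^ 2 := by
    simp only [Derivation.leibniz, Derivation.leibniz_pow, map_sub, n2, smul_eq_mul, nsmul_eq_mul]
    push_cast
    linear_combination (4 * α - 3 * α ^ 2) * hd + α ^ 2 * (α - 1) * hw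
  have L1 : ((3 : ℕ) : PowerSeries ℚ) * (X * derivative ℚ (α ^ 2))
      + ((0 : ℕ) : PowerSeries ℚ) * (α ^ 2) = 6 * (w * (α ^ 3 - α ^ 2)) := by
    simp only [Derivation.leibniz_pow, smul_eq_mul, nsmul_eq_mul]
    push_cast
    linear_combination 6 * α * hd
  have n6 : derivative ℚ (6 : PowerSeries ℚ) = 0 := by
    simpa using (derivative ℚ).map_natCast 6
  have n8 : derivative ℚ (8 : PowerSeries ℚ) = 0 := by
    simpa using (derivative ℚ).map_natCast 8
  have n30 : derivative ℚ (30 : PowerSeries ℚ) = 0 := by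
    simpa using (derivative ℚ).map_natCast 30
  have n29 : derivative ℚ (29 : PowerSeries ℚ) = 0 := by
    simpa using (derivative ℚ).map_natCast 29
  have n9 : derivative ℚ (9 : PowerSeries ℚ) = 0 := by
    simpa using (derivative ℚ).map_natCast 9
  -- generic rule
  have gen : ∀ (p q j : ℕ) (P P' : PowerSeries ℚ), derivative ℚ P = P' * derivative ℚ α →
      (p : PowerSeries ℚ) * (X * derivative ℚ (w ^ (j + 1) * P))
        + (q : PowerSeries ℚ) * (w ^ (j + 1) * P)
      = w ^ (j + 3) * ((p : PowerSeries ℚ) * ((4 - 3 * α) * α * (α - 1) * P' + 3 * ((j : PowerSeries ℚ) + 1) * α * (α - 1) * P)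
          + (q : PowerSeries ℚ) * (4 - 3 * α) ^ 2 * P) := by
    intro p q j P P' h
    simp only [Derivation.leibniz, Derivation.leibniz_pow, h, Nat.add_sub_cancel, smul_eq_mul, nsmul_eq_mul]
    push_cast
    linear_combination (p : PowerSeries ℚ) * w ^ (j + 1) * P' * hd + (p : PowerSeries ℚ) * P * ((j : PowerSeries ℚ) + 1) * w ^ j * hdw
      - ((p : PowerSeries ℚ) * w ^ (j + 2) * α * (α - 1) * P') * hw
      - ((q : PowerSeries ℚ) * w ^ (j + 1) * P) * (w * (4 - 3 * α) + 1) * hw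
  have L2 := gen 3 1 0 (6 * (α ^ 3 - α ^ 2)) (6 * (3 * α ^ 2 - 2 * α)) (by
    simp only [Derivation.leibniz, Derivation.leibniz_pow, map_sub, n6, smul_eq_mul, nsmul_eq_mul]
    push_cast; ring)
  have L3 := gen 3 2 2 (6 * (-9 * α ^ 5 + 30 * α ^ 4 - 29 * α ^ 3 + 8 * α ^ 2))
    (6 * (-45 * α ^ 4 + 120 * α ^ 3 - 87 * α ^ 2 + 16 * α)) (by
    simp only [Derivation.leibniz, Derivation.leibniz_pow, map_sub, map_add, map_neg, n6, n8, n9,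
      n29, n30, smul_eq_mul, nsmul_eq_mul]
    push_cast; ring)
  have R1 : ((4 : ℕ) : PowerSeries ℚ) * (X * derivative ℚ (α ^ 2))
      + ((2 : ℕ) : PowerSeries ℚ) * (α ^ 2) = w ^ (0 + 1) * (2 * α ^ 3) := by
    simp only [Derivation.leibniz_pow, smul_eq_mul, nsmul_eq_mul]
    push_cast
    linear_combination 8 * α * hd - 2 * α ^ 2 * hw
  have R2 := gen 4 3 0 (2 * α ^ 3) (6 * α ^ 2) (by
    simp only [Derivation.leibniz, Derivation.leibniz_pow, n2, smul_eq_mul, nsmul_eq_mul]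
    push_cast; ring)
  have R3 := gen 4 5 2 (6 * α ^ 5) (30 * α ^ 4) (by
    simp only [Derivation.leibniz, Derivation.leibniz_pow, n6, smul_eq_mul, nsmul_eq_mul]
    push_cast; ring)
  have eL1 : 6 * (w * (α ^ 3 - α ^ 2)) = w ^ (0 + 1) * (6 * (α ^ 3 - α ^ 2)) := by ring
  rw [eL1] at L1
  have cL2 : ∀ m : ℕ, coeff m (w ^ (2 + 1) * (6 * (-9 * α ^ 5 + 30 * α ^ 4 - 29 * α ^ 3 + 8 * α ^ 2)))
      = (3 * (m : ℚ) + 1) * ((3 * (m : ℚ)) * coeff m (α ^ 2)) := by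
    intro m
    have h1 := coeff_op 3 0 (α ^ 2) m
    have h2 := coeff_op 3 1 (w ^ (0 + 1) * (6 * (α ^ 3 - α ^ 2))) m
    rw [L1] at h1
    rw [L2, h1] at h2
    push_cast at h2
    rw [add_zero] at h2
    rw [← h2]
    congr 1
    ring
  have cR2 : ∀ m : ℕ, coeff m (w ^ (2 + 1) * (6 * α ^ 5))
      = (4 * (m : ℚ) + 3) * ((4 * (m : ℚ) + 2) * coeff m (α ^ 2)) := by
    intro m
    have h1 := coeff_op 4 2 (α ^ 2) m
    have h2 := coeff_op 4 3 (w ^ (0 + 1) * (2 * α ^ 3)) m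
    rw [R1] at h1
    rw [R2, h1] at h2
    push_cast at h2
    rw [← h2]
    congr 1
    ring
  have cL3 := coeff_op 3 2 (w ^ (2 + 1) * (6 * (-9 * α ^ 5 + 30 * α ^ 4 - 29 * α ^ 3 + 8 * α ^ 2)))
    (n + 1)
  have cR3 := coeff_op 4 5 (w ^ (2 + 1) * (6 * α ^ 5)) n
  rw [L3, cL2] at cL3
  rw [R3, cR2] at cR3
  refine ⟨?_, ?_, ?_⟩
  · have := coeff_op 1 1 (α ^ 2 * (2 - α)) n
    rw [hθF] at this
    rw [this]; push_cast; ring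
  · rw [← coeff_succ_X_mul] at cR3
    have key : ∀ l r : PowerSeries ℚ, α ^ 4 * l = 4 * (α - 1) * r → l = (4 : ℕ) • (X * r) := by
      intro l r h
      have hne : α ^ 4 ≠ 0 := by
        apply pow_ne_zero
        rintro rfl
        simp at h0
      apply mul_left_cancel₀ hne
      rw [h, nsmul_eq_mul]
      push_cast
      linear_combination -4 * r * hX
    have key2 : ∀ (l r : PowerSeries ℚ) (a b : ℚ), coeff (n + 1) l = a →
        coeff (n + 1) (X * r) = b → α ^ 4 * l = 4 * (α - 1) * r → a = 4 * b := by
      intro l r a b ha hb h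
      rw [← ha, ← hb, key l r h, map_nsmul, nsmul_eq_mul]
      norm_num
    have fin := key2 _ _ _ _ cL3 cR3 (by push_cast; ring)
    push_cast at fin
    linear_combination fin
  · simp [h0]

theorem loopless_maps_coeff (α : PowerSeries ℚ)
    (hα : α = 1 + PowerSeries.X * α ^ 4) (n : ℕ) :
    PowerSeries.coeff n (α ^ 2 * (2 - α)) =
      2 * ((4 * n + 1).factorial : ℚ) /
        (((n + 1).factorial : ℚ) * ((3 * n + 2).factorial : ℚ)) := by
  have main : ∀ m : ℕ, PowerSeries.coeff m (α ^ 2) * ((m.factorial : ℚ) * (3 * m + 2).factorial)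
      = 2 * ((4 * m + 1).factorial : ℚ) := by
    intro m
    induction m with
    | zero => rw [(alpha_facts α hα 0).2.2]; norm_num [Nat.factorial]
    | succ k ih =>
      have h := (alpha_facts α hα k).2.1
      have e1 : 3 * (k + 1) + 2 = 3 * k + 2 + 1 + 1 + 1 := by ring
      have e2 : 4 * (k + 1) + 1 = 4 * k + 1 + 1 + 1 + 1 + 1 := by ring
      rw [e1, e2]
      simp only [Nat.factorial_succ (4 * k + 1 + 1 + 1 + 1), Nat.factorial_succ (4 * k + 1 + 1 + 1),
        Nat.factorial_succ (4 * k + 1 + 1), Nat.factorial_succ (4 * k + 1),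
        Nat.factorial_succ (3 * k + 2 + 1 + 1), Nat.factorial_succ (3 * k + 2 + 1),
        Nat.factorial_succ (3 * k + 2), Nat.factorial_succ k]
      push_cast
      generalize ((4 * k + 1).factorial : ℚ) = F at *
      generalize ((3 * k + 2).factorial : ℚ) = G at *
      generalize (k.factorial : ℚ) = H at *
      linear_combination ((k : ℚ) + 1) * G * H * h
        + 4 * (k + 1) * ((4 * k + 5) * (4 * k + 3) * (4 * k + 2)) * ih
  have h1 := (alpha_facts α hα n).1
  have h2 := main n
  rw [← h1] at h2
  rw [eq_div_iff (by positivity), Nat.factorial_succ n]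
  push_cast
  linear_combination h2
end
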